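/- Let φ_j, φ_k : ℝⁿ → ℝ be smooth ℤⁿ-periodic eigenfunctions with the same eigenvalue: Δφ_j = −λ²φ_j and Δφ_k = −λ²φ_k for some λ > 0. Then ∫_{N_{φ_j}} |φ_k(x)| ‖∇φ_j(x)‖ dμH^{n−1}(x) = ∫_{N_{φ_k}} |φ_j(x)| ‖∇φ_k(x)‖ dμH^{n−1}(x). -/

import Mathlib

/-!
Write `f = φj`, `g = φk` and let `c` be the ratio of `μH[n-1]` to Lebesgue measure on `ℝⁿ⁻¹`. The
proof shows that
`∫_{Q ∩ {f = 0}} |g| ‖∇f‖ dμH[n-1] = c/2 ∫_Q (λ² |f| |g| - sgn f sgn g ∇f·∇g) dx`,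
and the right-hand side is symmetric in `f` and `g` (`nodal_torus`, `symDensity_comm`).

The main tool is the surface formula (`nodal_eq`): for every smooth `f` and every nonnegative
`ψ ∈ C_c^∞(ℝⁿ)`,
`∫_{f = 0} ψ ‖∇f‖ dμH[n-1] = -c/2 ∫ sgn f · div (ψ ∇f) dx`.
It is the Gauss-Green formula on `{f > 0}` and `{f < 0}`, and is obtained here without the theory of
hypersurfaces:

* `∫ sgn f · div u ≤ 0` for every compactly supported field `u` with `u · ∇f ≥ 0`
  (`sign_div_nonpos`), by integrating by parts against `arctan (k f)`. Near a regular point `p`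
  with unit normal `e`, this compares `div (ψ ∇f)` with a multiple of `∂ₑψ` (`surf_compare`).
* `-1/2 ∫ sgn f ∂ₑψ` is evaluated by Fubini on the lines parallel to `e`. Near `p` each of them
  meets the nodal set at most once, and the projection along `e` is almost an isometry from the
  nodal set to `ℝⁿ⁻¹` (`slice_compare`, `lintegral_bilip`).
* A partition of unity makes the errors of these local comparisons arbitrarily small, which proves
  the formula when `ψ` is supported off the critical points (`nodal_eq_of_regular`). A cutoff in
  `‖∇f‖²` removes this restriction: the error terms are bounded by second derivatives of `f`, and
  `div (ψ ∇f) = 0` almost everywhere on `{∇f = 0}` by `pd_ae_zero`.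

Taking `ψ = χ √(g² + τ²)` with a cutoff `χ` and letting `τ → 0` gives a formula with the weight
`χ |g|` (`nodal_abs`), in which `Δf = -λ² f` is used. Finally `χ` is chosen so that its
`ℤⁿ`-translates sum to `1`; those of `∂ᵢχ` then sum to `0`, and unfolding (`unfold_integral`) turns
the integrals over `ℝⁿ` into integrals over `Q`.
-/

open MeasureTheory Real Set

noncomputable section

/-- The Euclidean Laplacian `Δφ = Σᵢ ∂²φ/∂xᵢ²`. -/
def lap {n : ℕ} (φ : EuclideanSpace ℝ (Fin n) → ℝ) (x : EuclideanSpace ℝ (Fin n)) : ℝ :=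
  ∑ i : Fin n,
    fderiv ℝ (fun y => fderiv ℝ φ y (EuclideanSpace.single i 1)) x (EuclideanSpace.single i 1)

/-- `ℤⁿ`-periodicity of a function on `ℝⁿ`. -/
def ZPeriodic {n : ℕ} (φ : EuclideanSpace ℝ (Fin n) → ℝ) : Prop :=
  ∀ (x : EuclideanSpace ℝ (Fin n)) (k : Fin n → ℤ),
    φ (x + (WithLp.equiv 2 (Fin n → ℝ)).symm fun i => (k i : ℝ)) = φ x

/-- The fundamental domain `Q = [0,1)ⁿ`. -/
def Qcube (n : ℕ) : Set (EuclideanSpace ℝ (Fin n)) :=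
  {x | ∀ i, x i ∈ Set.Ico (0 : ℝ) 1}

open Filter Topology
open scoped ContDiff ENNReal NNReal

/-! ### Partial derivatives and the sign of a function -/

/-- The partial derivative `∂ᵢu`. -/
def pd {n : ℕ} (i : Fin n) (u : EuclideanSpace ℝ (Fin n) → ℝ) (x : EuclideanSpace ℝ (Fin n)) : ℝ :=
  fderiv ℝ u x (EuclideanSpace.single i 1)

section Partial
variable {n : ℕ} {u v f : EuclideanSpace ℝ (Fin n) → ℝ} {i : Fin n}

lemma pd_smooth (hu : ContDiff ℝ ∞ u) (i : Fin n) : ContDiff ℝ ∞ (pd i u) := by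
  unfold pd
  exact (hu.fderiv_right (m := ∞) (by simp)).clm_apply contDiff_const

lemma smooth_diff (hu : ContDiff ℝ ∞ u) : Differentiable ℝ u := hu.differentiable (by simp)

lemma pd_mul (hu : Differentiable ℝ u) (hv : Differentiable ℝ v) (x : EuclideanSpace ℝ (Fin n)) :
    pd i (fun y => u y * v y) x = u x * pd i v x + v x * pd i u x := by
  unfold pd
  rw [fderiv_fun_mul (hu x) (hv x)]
  simp

lemma pd_sub (hu : Differentiable ℝ u) (hv : Differentiable ℝ v) (x : EuclideanSpace ℝ (Fin n)) :
    pd i (fun y => u y - v y) x = pd i u x - pd i v x := by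
  unfold pd
  rw [fderiv_fun_sub (hu x) (hv x)]
  simp

lemma pd_const_mul (hu : Differentiable ℝ u) (c : ℝ) (x : EuclideanSpace ℝ (Fin n)) :
    pd i (fun y => c * u y) x = c * pd i u x := by
  unfold pd
  rw [fderiv_const_mul (hu x)]
  simp

lemma pd_sum {ι : Type*} (s : Finset ι) {u : ι → EuclideanSpace ℝ (Fin n) → ℝ}
    (hu : ∀ j ∈ s, Differentiable ℝ (u j)) (x : EuclideanSpace ℝ (Fin n)) :
    pd i (fun y => ∑ j ∈ s, u j y) x = ∑ j ∈ s, pd i (u j) x := by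
  unfold pd
  rw [fderiv_fun_sum (fun j hj => hu j hj x)]
  simp

lemma pd_comp {g : ℝ → ℝ} (hg : Differentiable ℝ g) (hu : Differentiable ℝ u)
    (x : EuclideanSpace ℝ (Fin n)) :
    pd i (fun y => g (u y)) x = deriv g (u x) * pd i u x := by
  unfold pd
  have := ((hg (u x)).hasDerivAt.comp_hasFDerivAt x (hu x).hasFDerivAt).fderiv
  have e : (g ∘ u) = fun y => g (u y) := rfl
  rw [e] at this
  rw [this]; simp

lemma pd_compact (hu : HasCompactSupport u) (i : Fin n) : HasCompactSupport (pd i u) :=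
  hu.fderiv_apply (𝕜 := ℝ) _

lemma fderiv_eq_sum (u : EuclideanSpace ℝ (Fin n) → ℝ) (x w : EuclideanSpace ℝ (Fin n)) :
    fderiv ℝ u x w = ∑ i, w i * pd i u x := by
  have h : w = ∑ i, w i • EuclideanSpace.single i (1 : ℝ) := by
    ext j; simp [Pi.single_apply]
  conv_lhs => rw [h]
  rw [map_sum]
  simp [pd]

lemma gradient_apply (u : EuclideanSpace ℝ (Fin n) → ℝ) (x : EuclideanSpace ℝ (Fin n)) (i : Fin n) :
    gradient u x i = pd i u x := by
  have : inner ℝ (gradient u x) (EuclideanSpace.single i (1:ℝ)) = pd i u x := by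
    simp [gradient, pd]
  rw [← this, EuclideanSpace.inner_single_right]
  simp

lemma norm_gradient_sq (u : EuclideanSpace ℝ (Fin n) → ℝ) (x : EuclideanSpace ℝ (Fin n)) :
    ‖gradient u x‖ ^ 2 = ∑ i, pd i u x ^ 2 := by
  rw [EuclideanSpace.norm_sq_eq]
  simp [gradient_apply]

lemma continuous_gradient (hu : ContDiff ℝ ∞ u) : Continuous (gradient u) := by
  have : gradient u = fun x => WithLp.toLp 2 (fun i => pd i u x) := by
    ext x i; simp [gradient_apply]
  rw [this]
  have := fun i => (pd_smooth hu i).continuous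
  fun_prop

lemma measurable_sign : Measurable Real.sign := by
  unfold Real.sign
  exact Measurable.ite measurableSet_Iio measurable_const
    (Measurable.ite measurableSet_Ioi measurable_const measurable_const)

lemma abs_sign_le (t : ℝ) : |Real.sign t| ≤ 1 := by
  rcases lt_trichotomy t 0 with h | h | h <;> simp [Real.sign, h, h.not_gt]

lemma sign_mul_integrable {h : EuclideanSpace ℝ (Fin n) → ℝ} (hf : Continuous f)
    (hh : Integrable h) : Integrable (fun x => Real.sign (f x) * h x) := by
  refine hh.bdd_mul (c := 1) (measurable_sign.comp hf.measurable).aestronglyMeasurable ?_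
  exact Eventually.of_forall fun x => abs_sign_le _

lemma tendsto_arctan_sign (t : ℝ) :
    Tendsto (fun k : ℕ => Real.arctan (k * t)) atTop (𝓝 (π / 2 * Real.sign t)) := by
  rcases lt_trichotomy t 0 with h | h | h
  · rw [Real.sign_of_neg h]
    have : Tendsto (fun k : ℕ => (k : ℝ) * t) atTop atBot :=
      tendsto_natCast_atTop_atTop.atTop_mul_const_of_neg h
    simpa [Function.comp_def] using
      (Real.tendsto_arctan_atBot.mono_right nhdsWithin_le_nhds).comp this
  · simp [h]
  · rw [Real.sign_of_pos h]
    have : Tendsto (fun k : ℕ => (k : ℝ) * t) atTop atTop :=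
      tendsto_natCast_atTop_atTop.atTop_mul_const h
    simpa [Function.comp_def] using
      (Real.tendsto_arctan_atTop.mono_right nhdsWithin_le_nhds).comp this

/-- Integration by parts against the smoothed sign `arctan (k f)`. -/
lemma ibp_arctan (hu : ContDiff ℝ 1 u) (huc : HasCompactSupport u) (hf : ContDiff ℝ 1 f)
    (k : ℝ) (i : Fin n) :
    ∫ x, Real.arctan (k * f x) * pd i u x =
      - ∫ x, (k / (1 + (k * f x) ^ 2)) * (u x * pd i f x) := by
  have hA : ContDiff ℝ 1 (fun x => Real.arctan (k * f x)) :=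
    Real.contDiff_arctan.comp (contDiff_const.mul hf)
  have hd : ∀ x, fderiv ℝ (fun x => Real.arctan (k * f x)) x (EuclideanSpace.single i 1)
      = (k / (1 + (k * f x) ^ 2)) * pd i f x := by
    intro x
    have h1 := ((hf.differentiable one_ne_zero x).hasFDerivAt.const_mul k).arctan
    rw [h1.fderiv]; simp [pd]; ring
  have hpu : Continuous (pd i u) := by
    unfold pd; exact (hu.continuous_fderiv one_ne_zero).clm_apply continuous_const
  have hpA : Continuous (fun x => fderiv ℝ (fun x => Real.arctan (k * f x)) x
      (EuclideanSpace.single i 1)) :=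
    (hA.continuous_fderiv one_ne_zero).clm_apply continuous_const
  have := integral_mul_fderiv_eq_neg_fderiv_mul_of_integrable (μ := volume)
    (f := fun x => Real.arctan (k * f x)) (g := u) (v := EuclideanSpace.single i 1)
    ((hpA.mul hu.continuous).integrable_of_hasCompactSupport huc.mul_left)
    ((hA.continuous.mul hpu).integrable_of_hasCompactSupport (pd_compact huc i).mul_left)
    ((hA.continuous.mul hu.continuous).integrable_of_hasCompactSupport huc.mul_left)
    (fun x _ => hA.differentiable one_ne_zero x) (fun x _ => hu.differentiable one_ne_zero x)
  simp only [hd] at this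
  unfold pd at this ⊢
  rw [this]
  congr 1
  refine integral_congr_ae (Eventually.of_forall fun x => ?_)
  simp only; ring

/-- If a compactly supported field `u` points along increasing values of `f`, then
`∫ sgn f · div u ≤ 0`: distributionally `∇ (sgn f)` is a nonnegative multiple of `∇f`. -/
lemma sign_div_nonpos {u : Fin n → EuclideanSpace ℝ (Fin n) → ℝ} (hu : ∀ i, ContDiff ℝ ∞ (u i))
    (huc : ∀ i, HasCompactSupport (u i)) (hf : ContDiff ℝ ∞ f)
    (hpos : ∀ x, 0 ≤ ∑ i, u i x * pd i f x) :
    ∫ x, Real.sign (f x) * ∑ i, pd i (u i) x ≤ 0 := by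
  have hint : ∀ i, Integrable (pd i (u i)) := fun i =>
    (pd_smooth (hu i) i).continuous.integrable_of_hasCompactSupport (pd_compact (huc i) i)
  have hdiv : Integrable (fun x => ∑ i, pd i (u i) x) := integrable_finsetSum _ fun i _ => hint i
  have hk : ∀ k : ℕ, ∫ x, Real.arctan (k * f x) * ∑ i, pd i (u i) x ≤ 0 := by
    intro k
    have hc : Continuous fun x => Real.arctan ((k:ℝ) * f x) :=
      Real.continuous_arctan.comp (continuous_const.mul hf.continuous)
    have e : ∫ x, Real.arctan (k * f x) * ∑ i, pd i (u i) x
        = - ∫ x, ((k:ℝ) / (1 + (k * f x) ^ 2)) * ∑ i, u i x * pd i f x := by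
      simp only [Finset.mul_sum]
      rw [integral_finsetSum, integral_finsetSum, ← Finset.sum_neg_distrib]
      · refine Finset.sum_congr rfl fun i _ => ?_
        exact ibp_arctan ((hu i).of_le (by simp)) (huc i) (hf.of_le (by simp)) k i
      · intro i _
        have hc2 : Continuous fun x => ((k:ℝ) / (1 + (k * f x) ^ 2)) :=
          continuous_const.div (by have := hf.continuous; fun_prop) (fun x => by positivity)
        exact (hc2.mul ((hu i).continuous.mul
          (pd_smooth hf i).continuous)).integrable_of_hasCompactSupport
          ((huc i).mul_right.mul_left)
      · intro i _
        exact (hc.mul (pd_smooth (hu i) i).continuous).integrable_of_hasCompactSupport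
          (pd_compact (huc i) i).mul_left
    rw [e, neg_nonpos]
    exact integral_nonneg fun x => mul_nonneg (by positivity) (hpos x)
  have hlim : Tendsto (fun k : ℕ => ∫ x, Real.arctan (k * f x) * ∑ i, pd i (u i) x) atTop
      (𝓝 (∫ x, (π / 2 * Real.sign (f x)) * ∑ i, pd i (u i) x)) := by
    refine tendsto_integral_of_dominated_convergence (fun x => π / 2 * |∑ i, pd i (u i) x|)
      (fun k => ?_) (hdiv.abs.const_mul _) (fun k => Eventually.of_forall fun x => ?_)
      (Eventually.of_forall fun x => (tendsto_arctan_sign (f x)).mul_const _)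
    · exact ((Real.continuous_arctan.comp
        (continuous_const.mul hf.continuous)).aestronglyMeasurable).mul hdiv.1
    · rw [Real.norm_eq_abs, abs_mul]
      gcongr
      exact abs_le.2 ⟨(Real.neg_pi_div_two_lt_arctan _).le, (Real.arctan_lt_pi_div_two _).le⟩
  have := le_of_tendsto' hlim hk
  simp only [mul_assoc] at this
  rw [integral_const_mul] at this
  have hpi := Real.pi_pos
  by_contra! h
  nlinarith [mul_pos hpi h]

/-- `∂ᵢf = 0` almost everywhere on `{f = 0}`, by integrating `∂ᵢ(ψ ∂ᵢf)` against
`arctan (k f) / k`, which tends to `0` uniformly. -/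
lemma pd_ae_zero (hh : ContDiff ℝ ∞ f) (i : Fin n) : ∀ᵐ x, f x = 0 → pd i f x = 0 := by
  have key : ∀ ψ : EuclideanSpace ℝ (Fin n) → ℝ, ContDiff ℝ ∞ ψ → HasCompactSupport ψ →
      (∀ x, 0 ≤ ψ x) → ∀ᵐ x, f x = 0 → ψ x * pd i f x ^ 2 = 0 := by
    intro ψ hψ hψc hψ0
    have hu : ContDiff ℝ ∞ (fun x => ψ x * pd i f x) := hψ.mul (pd_smooth hh i)
    have huc : HasCompactSupport (fun x => ψ x * pd i f x) := hψc.mul_right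
    have hgc : HasCompactSupport (fun x => ψ x * pd i f x ^ 2) := hψc.mul_right
    have hgcont : Continuous (fun x => ψ x * pd i f x ^ 2) :=
      hψ.continuous.mul ((pd_smooth hh i).continuous.pow 2)
    have hg : Integrable (fun x => ψ x * pd i f x ^ 2) :=
      hgcont.integrable_of_hasCompactSupport hgc
    have hpu : Integrable (pd i (fun x => ψ x * pd i f x)) :=
      (pd_smooth hu i).continuous.integrable_of_hasCompactSupport (pd_compact huc i)
    have h1 : Tendsto (fun k : ℕ => ∫ x, 1 / (1 + ((k:ℝ) * f x) ^ 2) * (ψ x * pd i f x ^ 2)) atTop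
        (𝓝 (∫ x, (if f x = 0 then 1 else 0) * (ψ x * pd i f x ^ 2))) := by
      refine tendsto_integral_of_dominated_convergence (fun x => |ψ x * pd i f x ^ 2|)
        (fun k => ?_) hg.abs (fun k => Eventually.of_forall fun x => ?_)
        (Eventually.of_forall fun x => Tendsto.mul_const _ ?_)
      · refine Continuous.aestronglyMeasurable ?_
        refine Continuous.mul (continuous_const.div ?_ (fun x => by positivity)) hgcont
        have := hh.continuous; fun_prop
      · rw [Real.norm_eq_abs, abs_mul]
        refine mul_le_of_le_one_left (abs_nonneg _) ?_
        rw [abs_of_nonneg (by positivity)]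
        exact div_le_one_of_le₀ (by nlinarith [sq_nonneg ((k:ℝ) * f x)]) (by positivity)
      · by_cases hx : f x = 0
        · simp [hx]
        · simp only [hx, if_false]
          have : Tendsto (fun k : ℕ => (k:ℝ) ^ 2 * (f x) ^ 2) atTop atTop :=
            ((tendsto_pow_atTop two_ne_zero).comp tendsto_natCast_atTop_atTop).atTop_mul_const
              (by positivity)
          simp only [mul_pow, one_div]
          exact (tendsto_atTop_add_const_left _ _ this).inv_tendsto_atTop
    have h2 : Tendsto (fun k : ℕ => ∫ x, 1 / (1 + ((k:ℝ) * f x) ^ 2) * (ψ x * pd i f x ^ 2)) atTop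
        (𝓝 0) := by
      have hb : ∀ k : ℕ, 0 < k → |∫ x, 1 / (1 + ((k:ℝ) * f x) ^ 2) * (ψ x * pd i f x ^ 2)| ≤
          (π / 2 * ∫ x, |pd i (fun x => ψ x * pd i f x) x|) / k := by
        intro k hk
        have hk' : (0:ℝ) < k := by exact_mod_cast hk
        have e := ibp_arctan (hu.of_le (by simp)) huc (hh.of_le (by simp)) (k:ℝ) i
        have e2 : ∫ x, 1 / (1 + ((k:ℝ) * f x) ^ 2) * (ψ x * pd i f x ^ 2) =
            -(∫ x, Real.arctan (k * f x) * pd i (fun x => ψ x * pd i f x) x) / k := by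
          rw [e, neg_neg, eq_div_iff hk'.ne', ← integral_mul_const]
          refine integral_congr_ae (Eventually.of_forall fun x => ?_)
          simp only; ring
        rw [e2, abs_div, abs_neg, abs_of_pos hk', ← integral_const_mul]
        gcongr
        refine (abs_integral_le_integral_abs).trans ?_
        refine integral_mono_of_nonneg (Eventually.of_forall fun x => abs_nonneg _)
          (hpu.abs.const_mul _) (Eventually.of_forall fun x => ?_)
        simp only [abs_mul]
        gcongr
        exact abs_le.2 ⟨(Real.neg_pi_div_two_lt_arctan _).le, (Real.arctan_lt_pi_div_two _).le⟩
      refine squeeze_zero_norm' ?_ (tendsto_const_div_atTop_nhds_zero_nat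
        (π / 2 * ∫ x, |pd i (fun x => ψ x * pd i f x) x|))
      filter_upwards [eventually_gt_atTop 0] with k hk using hb k hk
    have h3 := tendsto_nhds_unique h1 h2
    have hm : Integrable (fun x => (if f x = 0 then (1:ℝ) else 0) * (ψ x * pd i f x ^ 2)) := by
      refine hg.bdd_mul (c := 1) ?_ (Eventually.of_forall fun x => ?_)
      · exact (Measurable.ite (hh.continuous.measurable (measurableSet_singleton 0))
          measurable_const measurable_const).aestronglyMeasurable
      · split_ifs <;> simp
    rw [integral_eq_zero_iff_of_nonneg ?_ hm] at h3
    · filter_upwards [h3] with x hx hfx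
      simpa [hfx] using hx
    · intro x
      have := hψ0 x
      simp only [Pi.zero_apply]
      split_ifs <;> positivity
  have hb : ∀ N : ℕ, ∀ᵐ x : EuclideanSpace ℝ (Fin n), ‖x‖ ≤ N → f x = 0 → pd i f x = 0 := by
    intro N
    let b : ContDiffBump (0 : EuclideanSpace ℝ (Fin n)) :=
      ⟨N + 1, N + 2, by positivity, by linarith⟩
    filter_upwards [key b b.contDiff b.hasCompactSupport (fun x => b.nonneg)] with x hx hN hfx
    have h1 : b x = 1 := b.one_of_mem_closedBall (by
      simp [b]; linarith)
    simpa [h1] using hx hfx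
  rw [← ae_all_iff] at hb
  filter_upwards [hb] with x hx
  obtain ⟨N, hN⟩ := exists_nat_ge ‖x‖
  exact hx N hN

end Partial

/-! ### Slicing along a direction and Hausdorff measure -/

lemma integral_deriv_zero {u : ℝ → ℝ} (hu : ContDiff ℝ 1 u) (huc : HasCompactSupport u) :
    ∫ t, deriv u t = 0 := by
  have hi : Integrable (deriv u) :=
    (hu.continuous_deriv le_rfl).integrable_of_hasCompactSupport huc.deriv
  rw [← intervalIntegral.integral_Iic_add_Ioi (b := 0) hi.integrableOn hi.integrableOn,
    huc.integral_Iic_deriv_eq hu, huc.integral_Ioi_deriv_eq hu]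
  ring

/-- One-dimensional jump formula: `∫ sgn h · du/dt = -2 u(t₀)` if `h` increases strictly through a
zero `t₀` on a set `O` off which `du/dt` vanishes. -/
lemma sign_deriv_of_zero {u h : ℝ → ℝ} {O : Set ℝ} (hu : ContDiff ℝ 1 u)
    (huc : HasCompactSupport u) (hO : ∀ t, t ∉ O → deriv u t = 0) (hh : StrictMonoOn h O)
    (hc : Continuous h) {t₀ : ℝ} (ht : t₀ ∈ O) (h0 : h t₀ = 0) :
    ∫ t, Real.sign (h t) * deriv u t = -2 * u t₀ := by
  have hi : Integrable (deriv u) :=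
    (hu.continuous_deriv le_rfl).integrable_of_hasCompactSupport huc.deriv
  have hs : Integrable (fun t => Real.sign (h t) * deriv u t) := by
    refine hi.bdd_mul (c := 1) (measurable_sign.comp hc.measurable).aestronglyMeasurable ?_
    exact Eventually.of_forall fun x => abs_sign_le _
  rw [← intervalIntegral.integral_Iic_add_Ioi (b := t₀) hs.integrableOn hs.integrableOn]
  have e1 : ∫ t in Iic t₀, Real.sign (h t) * deriv u t = ∫ t in Iic t₀, - deriv u t := by
    rw [integral_Iic_eq_integral_Iio, integral_Iic_eq_integral_Iio]
    refine setIntegral_congr_fun measurableSet_Iio fun t htt => ?_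
    by_cases hto : t ∈ O
    · have : h t < 0 := h0 ▸ hh hto ht htt
      simp [Real.sign_of_neg this]
    · simp [hO t hto]
  have e2 : ∫ t in Ioi t₀, Real.sign (h t) * deriv u t = ∫ t in Ioi t₀, deriv u t := by
    refine setIntegral_congr_fun measurableSet_Ioi fun t htt => ?_
    by_cases hto : t ∈ O
    · have : 0 < h t := h0 ▸ hh ht hto htt
      simp [Real.sign_of_pos this]
    · simp [hO t hto]
  rw [e1, e2, integral_neg, huc.integral_Iic_deriv_eq hu, huc.integral_Ioi_deriv_eq hu]
  ring

/-- The companion of `sign_deriv_of_zero` for a line on which `h` has no zero in `O`. -/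
lemma sign_deriv_of_ne {u h : ℝ → ℝ} {O : Set ℝ} (hu : ContDiff ℝ 1 u)
    (huc : HasCompactSupport u) (hO : ∀ t, t ∉ O → deriv u t = 0) (hOc : IsPreconnected O)
    (hc : Continuous h) (h0 : ∀ t ∈ O, h t ≠ 0) :
    ∫ t, Real.sign (h t) * deriv u t = 0 := by
  have hd : (∀ t ∈ O, 0 < h t) ∨ (∀ t ∈ O, h t < 0) := by
    by_contra! hcon
    obtain ⟨⟨s, hs, hs'⟩, ⟨t, ht, ht'⟩⟩ := hcon
    obtain ⟨r, hr, hr'⟩ := hOc.intermediate_value hs ht hc.continuousOn ⟨hs', ht'⟩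
    exact h0 r hr hr'
  rcases hd with hd | hd
  · rw [← integral_deriv_zero hu huc]
    refine integral_congr_ae (Eventually.of_forall fun t => ?_)
    by_cases hto : t ∈ O
    · simp [Real.sign_of_pos (hd t hto)]
    · simp [hO t hto]
  · have : ∫ t, Real.sign (h t) * deriv u t = ∫ t, - deriv u t := by
      refine integral_congr_ae (Eventually.of_forall fun t => ?_)
      by_cases hto : t ∈ O
      · simp [Real.sign_of_neg (hd t hto)]
      · simp [hO t hto]
    rw [this, integral_neg, integral_deriv_zero hu huc, neg_zero]

/-- Orthogonal slicing of `ℝᵐ⁺¹` along a unit vector `e`: `U` identifies `ℝᵐ` with the hyperplane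
`e^⊥` and `P` is the orthogonal projection to it. -/
lemma exists_slicing {m : ℕ} (e : EuclideanSpace ℝ (Fin (m + 1))) (he : ‖e‖ = 1) :
    ∃ (U : EuclideanSpace ℝ (Fin m) →L[ℝ] EuclideanSpace ℝ (Fin (m + 1)))
      (P : EuclideanSpace ℝ (Fin (m + 1)) →L[ℝ] EuclideanSpace ℝ (Fin m)),
      MeasurePreserving (fun z : EuclideanSpace ℝ (Fin m) × ℝ => U z.1 + z.2 • e)
        (volume.prod volume) volume ∧
      MeasurableEmbedding (fun z : EuclideanSpace ℝ (Fin m) × ℝ => U z.1 + z.2 • e) ∧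
      (∀ x, U (P x) + (inner ℝ e x) • e = x) ∧ (∀ y (t : ℝ), P (U y + t • e) = y) ∧
      (∀ x, ‖P x‖ ≤ ‖x‖) ∧ (∀ x, ‖x‖ ≤ ‖P x‖ + |inner ℝ e x|) := by
  classical
  have he0 : e ≠ 0 := by rintro rfl; simp at he
  let S : Submodule ℝ (EuclideanSpace ℝ (Fin (m + 1))) := (ℝ ∙ e)ᗮ
  have : Fact (Module.finrank ℝ (EuclideanSpace ℝ (Fin (m + 1))) = m + 1) := ⟨by simp⟩
  have hS : Module.finrank ℝ S = m := Submodule.finrank_orthogonal_span_singleton he0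
  let W := ((stdOrthonormalBasis ℝ S).reindex (finCongr hS)).repr
  let U : EuclideanSpace ℝ (Fin m) →ₗᵢ[ℝ] EuclideanSpace ℝ (Fin (m + 1)) :=
    S.subtypeₗᵢ.comp W.symm.toLinearIsometry
  have hUe : ∀ y, inner ℝ e (U y) = 0 := fun y => by
    have : U y ∈ S := (W.symm y).2
    exact (Submodule.mem_orthogonal_singleton_iff_inner_right).1 this
  have hnorm : ∀ y (t : ℝ), ‖U y + t • e‖ ^ 2 = ‖y‖ ^ 2 + t ^ 2 := fun y t => by
    rw [norm_add_sq_real, inner_smul_right, real_inner_comm, hUe, norm_smul, he, U.norm_map]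
    simp
  let T0 : WithLp 2 (EuclideanSpace ℝ (Fin m) × ℝ) →ₗᵢ[ℝ] EuclideanSpace ℝ (Fin (m + 1)) :=
    { toFun := fun z => U z.fst + z.snd • e
      map_add' := fun a b => by simp [add_smul]; abel
      map_smul' := fun c a => by simp [mul_smul]
      norm_map' := fun z => by
        refine (sq_eq_sq₀ (norm_nonneg _) (norm_nonneg _)).1 ?_
        have := hnorm z.fst z.snd
        rw [WithLp.prod_norm_sq_eq_of_L2]
        simpa using this }
  have hfr : Module.finrank ℝ (WithLp 2 (EuclideanSpace ℝ (Fin m) × ℝ)) =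
      Module.finrank ℝ (EuclideanSpace ℝ (Fin (m + 1))) := by
    rw [(WithLp.linearEquiv 2 ℝ (EuclideanSpace ℝ (Fin m) × ℝ)).finrank_eq]
    simp
  let T := T0.toLinearIsometryEquiv hfr
  have hT : ∀ z, T z = U z.fst + z.snd • e := fun z => rfl
  let Q := (WithLp.prodContinuousLinearEquiv 2 ℝ (EuclideanSpace ℝ (Fin m)) ℝ)
  let P : EuclideanSpace ℝ (Fin (m + 1)) →L[ℝ] EuclideanSpace ℝ (Fin m) :=
    (ContinuousLinearMap.fst ℝ _ _).comp
      (Q.toContinuousLinearMap.comp T.symm.toContinuousLinearEquiv.toContinuousLinearMap)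
  have hP : ∀ x, P x = (T.symm x).fst := fun x => rfl
  have hdec : ∀ x, U (P x) + (inner ℝ e x) • e = x := fun x => by
    have h1 : U (T.symm x).fst + (T.symm x).snd • e = x := by rw [← hT]; simp
    have h2 : inner ℝ e x = (T.symm x).snd := by
      conv_lhs => rw [← h1]
      rw [inner_add_right, hUe, inner_smul_right, real_inner_self_eq_norm_sq, he]
      simp
    rw [h2, hP, h1]
  have hn2 : ∀ x, ‖x‖ ^ 2 = ‖P x‖ ^ 2 + (inner ℝ e x) ^ 2 := fun x => by
    conv_lhs => rw [← hdec x]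
    rw [hnorm]
  have hmp := (T.measurePreserving).comp
    ((WithLp.volume_preserving_symm_measurableEquiv_toLp_prod
      (EuclideanSpace ℝ (Fin m)) ℝ).symm)
  refine ⟨U.toContinuousLinearMap, P, hmp, ?_, hdec, ?_, ?_, ?_⟩
  · exact (T.toHomeomorph.measurableEmbedding).comp
      (MeasurableEquiv.toLp 2 (EuclideanSpace ℝ (Fin m) × ℝ)).measurableEmbedding
  · intro y t
    have : U y + t • e = T (WithLp.toLp 2 (y, t)) := rfl
    change P (U y + t • e) = y
    rw [hP, this]; simp
  · intro x
    refine abs_le_of_sq_le_sq' ?_ (norm_nonneg _) |>.2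
    rw [hn2 x]; nlinarith [sq_nonneg (inner ℝ e x)]
  · intro x
    refine abs_le_of_sq_le_sq' ?_ (by positivity) |>.2
    rw [hn2 x]
    nlinarith [sq_abs (inner ℝ e x), mul_nonneg (norm_nonneg (P x)) (abs_nonneg (inner ℝ e x))]

/-- The ratio between `μH[m]` and Lebesgue measure on `ℝᵐ`. -/
def hausdorffConst (m : ℕ) : ℝ≥0 :=
  Measure.addHaarScalarFactor (μH[m] : Measure (EuclideanSpace ℝ (Fin m))) volume

lemma hausdorff_eq (m : ℕ) :
    (μH[m] : Measure (EuclideanSpace ℝ (Fin m))) = hausdorffConst m • volume :=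
  Measure.isAddLeftInvariant_eq_smul _ _

/-- A map which is `1`-Lipschitz with `K`-Lipschitz inverse on `M` distorts integrals against
Hausdorff measure at most by `K ^ m`. -/
lemma lintegral_bilip {X Y : Type*} [MetricSpace X] [MeasurableSpace X] [BorelSpace X]
    [MetricSpace Y] [MeasurableSpace Y] [BorelSpace Y] [Nonempty X] {P : X → Y} {M : Set X}
    (hPc : Continuous P) (m : ℕ) (K : ℝ≥0) (hP : LipschitzWith 1 P)
    (hK : ∀ x ∈ M, ∀ y ∈ M, dist x y ≤ K * dist (P x) (P y)) {J : Y → ℝ≥0∞} (hJ : Measurable J)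
    (hJ0 : ∀ y, y ∉ P '' M → J y = 0) :
    ∫⁻ y, J y ∂μH[m] ≤ ∫⁻ x in M, J (P x) ∂μH[m] ∧
    ∫⁻ x in M, J (P x) ∂μH[m] ≤ (K : ℝ≥0∞) ^ m * ∫⁻ y, J y ∂μH[m] := by
  have hmap : ∫⁻ x in M, J (P x) ∂μH[m] = ∫⁻ y, J y ∂(Measure.map P (μH[m].restrict M)) :=
    (lintegral_map hJ hPc.measurable).symm
  rw [hmap]
  have himg : ∀ B : Set Y, P '' (P ⁻¹' B ∩ M) = B ∩ P '' M := fun B => by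
    ext y; constructor
    · rintro ⟨x, ⟨hx, hxM⟩, rfl⟩; exact ⟨hx, x, hxM, rfl⟩
    · rintro ⟨hy, x, hx, rfl⟩; exact ⟨x, ⟨hy, hx⟩, rfl⟩
  have hres : ∫⁻ y, J y ∂μH[m] = ∫⁻ y in P '' M, J y ∂μH[m] := by
    refine le_antisymm ?_ (setLIntegral_le_lintegral _ _)
    have hs : Function.support J ⊆ P '' M := fun y hy => by
      by_contra h; exact hy (hJ0 y h)
    calc ∫⁻ y, J y ∂μH[m] = ∫⁻ y in Function.support J, J y ∂μH[m] := by
          rw [← lintegral_indicator (measurableSet_support hJ), Set.indicator_support]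
      _ ≤ _ := lintegral_mono_set hs
  rw [hres]
  constructor
  · refine lintegral_mono' (Measure.le_iff.2 fun B hB => ?_) le_rfl
    rw [Measure.restrict_apply hB, Measure.map_apply hPc.measurable hB,
      Measure.restrict_apply (hPc.measurable hB), ← himg]
    simpa using hP.hausdorffMeasure_image_le (d := m) (by positivity) (P ⁻¹' B ∩ M)
  · rw [← smul_eq_mul, ← lintegral_smul_measure]
    refine lintegral_mono' (Measure.le_iff.2 fun B hB => ?_) le_rfl
    rw [Measure.map_apply hPc.measurable hB, Measure.restrict_apply (hPc.measurable hB),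
      Measure.smul_apply, Measure.restrict_apply hB, ← himg]
    set S := P ⁻¹' B ∩ M with hS
    have hinj : InjOn P S := fun x hx y hy hxy => by
      have := hK x hx.2 y hy.2
      rw [hxy, dist_self, mul_zero] at this
      exact dist_le_zero.1 this
    have hinv : ∀ x ∈ S, Function.invFunOn P S (P x) = x := fun x hx =>
      hinj.leftInvOn_invFunOn hx
    have hlip : LipschitzOnWith K (Function.invFunOn P S) (P '' S) := by
      refine LipschitzOnWith.of_dist_le_mul ?_
      rintro _ ⟨x, hx, rfl⟩ _ ⟨y, hy, rfl⟩
      rw [hinv x hx, hinv y hy]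
      exact hK x hx.2 y hy.2
    have himg2 : Function.invFunOn P S '' (P '' S) = S := by
      rw [← image_comp]
      ext x; constructor
      · rintro ⟨z, hz, rfl⟩; simpa [hinv z hz] using hz
      · intro hx; exact ⟨x, hx, hinv x hx⟩
    have := hlip.hausdorffMeasure_image_le (d := m) (by positivity)
    rw [himg2] at this
    simpa using this

/-- On a ball where `f` is `δ`-close to the linear form `a ⟨e, ·⟩`, the Hausdorff integral of `ψ`
over the nodal set is comparable with `-1/2 ∫ sgn f ∂ₑψ`. The latter is computed by Fubini along
the lines in direction `e`, each meeting the nodal set at most once. -/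
lemma slice_compare {m : ℕ} {f : EuclideanSpace ℝ (Fin (m + 1)) → ℝ} (hf : Continuous f)
    {e p : EuclideanSpace ℝ (Fin (m + 1))} (he : ‖e‖ = 1) {a δ r : ℝ} (ha : 0 < a)
    (hδ1 : δ < 1)
    (happ : ∀ x ∈ Metric.ball p r, ∀ y ∈ Metric.ball p r,
      |f x - f y - a * inner ℝ e (x - y)| ≤ δ * a * ‖x - y‖)
    {ψ : EuclideanSpace ℝ (Fin (m + 1)) → ℝ} (hψ : ContDiff ℝ ∞ ψ) (hψc : HasCompactSupport ψ)
    (hψ0 : ∀ x, 0 ≤ ψ x) (hsupp : tsupport ψ ⊆ Metric.ball p r) :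
    ENNReal.ofReal (hausdorffConst m * (-(1/2) * ∫ x, Real.sign (f x) * fderiv ℝ ψ x e))
      ≤ ∫⁻ x in {x | f x = 0}, ENNReal.ofReal (ψ x) ∂μH[m] ∧
    ∫⁻ x in {x | f x = 0}, ENNReal.ofReal (ψ x) ∂μH[m] ≤ ENNReal.ofReal ((1 / (1 - δ)) ^ m) *
      ENNReal.ofReal (hausdorffConst m * (-(1/2) * ∫ x, Real.sign (f x) * fderiv ℝ ψ x e)) := by
  obtain ⟨U, P, hmp, hme, hdec, hPU, hP1, hP2⟩ := exists_slicing e he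
  set G : EuclideanSpace ℝ (Fin (m + 1)) → ℝ := fun x => Real.sign (f x) * fderiv ℝ ψ x e with hG
  have hψd : ∀ x, x ∉ Metric.ball p r → fderiv ℝ ψ x = 0 := fun x hx =>
    image_eq_zero_of_notMem_tsupport (fun h => hx (hsupp (tsupport_fderiv_subset ℝ h)))
  have hGi : Integrable G := sign_mul_integrable hf
    (((hψ.continuous_fderiv (by simp)).clm_apply continuous_const).integrable_of_hasCompactSupport
      (hψc.fderiv_apply (𝕜 := ℝ) e))
  have hGp : Integrable (fun z : EuclideanSpace ℝ (Fin m) × ℝ => G (U z.1 + z.2 • e))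
      (volume.prod volume) := (hmp.integrable_comp_emb hme).2 hGi
  set J : EuclideanSpace ℝ (Fin m) → ℝ := fun y => -(1/2) * ∫ t : ℝ, G (U y + t • e) with hJ
  have hJi : Integrable J := hGp.integral_prod_left.const_mul _
  have hJint : ∫ y, J y = -(1/2) * ∫ x, G x := by
    rw [hJ, integral_const_mul, ← hmp.integral_comp hme, integral_prod _ hGp]
  -- restriction of `f` and `ψ` to the line over `y`
  have hline : ∀ y, ContDiff ℝ ∞ (fun t : ℝ => U y + t • e) := fun y =>
    contDiff_const.add (contDiff_id.smul contDiff_const)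
  have hu : ∀ y, ContDiff ℝ 1 (fun t : ℝ => ψ (U y + t • e)) := fun y =>
    (hψ.comp (hline y)).of_le (by simp)
  have huc : ∀ y, HasCompactSupport (fun t : ℝ => ψ (U y + t • e)) := fun y => by
    have hiso : Isometry (fun t : ℝ => U y + t • e) := by
      refine Isometry.of_dist_eq fun s t => ?_
      rw [dist_add_left, dist_eq_norm, ← sub_smul, norm_smul, he, mul_one, dist_eq_norm]
    exact hψc.comp_isClosedEmbedding hiso.isClosedEmbedding
  have hud : ∀ y t, deriv (fun t : ℝ => ψ (U y + t • e)) t = fderiv ℝ ψ (U y + t • e) e := by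
    intro y t
    have h1 : HasDerivAt (fun t : ℝ => U y + t • e) e t := by
      simpa using ((hasDerivAt_id t).smul_const e).const_add (U y)
    exact ((smooth_diff hψ _).hasFDerivAt.comp_hasDerivAt t h1).deriv
  have hJd : ∀ y, J y = -(1/2) * ∫ t : ℝ, Real.sign (f (U y + t • e)) *
      deriv (fun t : ℝ => ψ (U y + t • e)) t := fun y => by
    simp only [hJ, hG, hud]
  let O : EuclideanSpace ℝ (Fin m) → Set ℝ := fun y => {t | U y + t • e ∈ Metric.ball p r}
  have hOd : ∀ y t, t ∉ O y → deriv (fun t : ℝ => ψ (U y + t • e)) t = 0 := fun y t ht => by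
    rw [hud, hψd _ ht]; simp
  have hOc : ∀ y, IsPreconnected (O y) := fun y => by
    have : Convex ℝ (O y) := by
      intro s hs t ht α β hα hβ hαβ
      have := (convex_ball p r) hs ht hα hβ hαβ
      have e1 : α • (U y + s • e) + β • (U y + t • e) = U y + (α • s + β • t) • e := by
        rw [smul_add, smul_add, smul_smul, smul_smul, add_smul, smul_eq_mul, smul_eq_mul,
          add_add_add_comm, ← add_smul, hαβ, one_smul]
      rw [e1] at this
      exact this
    exact this.isPreconnected
  have hmono : ∀ y, StrictMonoOn (fun t : ℝ => f (U y + t • e)) (O y) := by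
    intro y s hs t ht hst
    have h1 := happ _ ht _ hs
    have e1 : (U y + t • e) - (U y + s • e) = (t - s) • e := by
      rw [sub_smul]; abel
    rw [e1, inner_smul_right, real_inner_self_eq_norm_sq, norm_smul, he, Real.norm_eq_abs,
      abs_of_pos (sub_pos.2 hst)] at h1
    have h2 := (abs_le.1 h1).1
    have h3 : 0 < a * (t - s) * (1 - δ) :=
      mul_pos (mul_pos ha (sub_pos.2 hst)) (sub_pos.2 hδ1)
    simp only
    nlinarith
  have hlc : ∀ y, Continuous (fun t : ℝ => f (U y + t • e)) := fun y =>
    hf.comp (hline y).continuous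
  set M : Set (EuclideanSpace ℝ (Fin (m + 1))) := {x | f x = 0} ∩ Metric.ball p r with hM
  have hJ1 : ∀ x ∈ M, J (P x) = ψ x := by
    rintro x ⟨hx0, hxb⟩
    have hx : U (P x) + (inner ℝ e x) • e = x := hdec x
    rw [hJd, sign_deriv_of_zero (hu _) (huc _) (hOd _) (hmono _) (hlc _)
      (t₀ := inner ℝ e x)
      (by change U (P x) + (inner ℝ e x) • e ∈ Metric.ball p r; rw [hx]; exact hxb)
      (by simp only [hx]; exact hx0), hx]
    ring
  have hJ2 : ∀ y, y ∉ P '' M → J y = 0 := by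
    intro y hy
    rw [hJd, sign_deriv_of_ne (hu _) (huc _) (hOd _) (hOc _) (hlc _), mul_zero]
    intro t ht h0
    exact hy ⟨U y + t • e, ⟨h0, ht⟩, hPU y t⟩
  have hJ0 : ∀ y, 0 ≤ J y := fun y => by
    by_cases hy : y ∈ P '' M
    · obtain ⟨x, hx, rfl⟩ := hy
      rw [hJ1 x hx]; exact hψ0 x
    · rw [hJ2 y hy]
  have hJm : Measurable J := by
    have : Measurable (fun z : EuclideanSpace ℝ (Fin m) × ℝ => G (U z.1 + z.2 • e)) := by
      have hGm : Measurable G := (measurable_sign.comp hf.measurable).mul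
        ((hψ.continuous_fderiv (by simp)).clm_apply continuous_const).measurable
      exact hGm.comp hme.measurable
    exact (this.stronglyMeasurable.integral_prod_right').measurable.const_mul _
  have hMeas : MeasurableSet M :=
    (isClosed_eq hf continuous_const).measurableSet.inter Metric.isOpen_ball.measurableSet
  have hZ : ∫⁻ x in {x | f x = 0}, ENNReal.ofReal (ψ x) ∂μH[m] =
      ∫⁻ x in M, ENNReal.ofReal (J (P x)) ∂μH[m] := by
    rw [setLIntegral_congr_fun hMeas (fun x hx => by
      show ENNReal.ofReal (J (P x)) = ENNReal.ofReal (ψ x); rw [hJ1 x hx])]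
    rw [hM, Set.inter_comm, ← Measure.restrict_restrict Metric.isOpen_ball.measurableSet]
    refine (setLIntegral_eq_of_support_subset ?_).symm
    intro x hx
    by_contra h
    exact hx (by simp [image_eq_zero_of_notMem_tsupport (fun h' => h (hsupp h'))])
  have hJH : ∫⁻ y, ENNReal.ofReal (J y) ∂μH[m] =
      ENNReal.ofReal (hausdorffConst m * (-(1/2) * ∫ x, G x)) := by
    rw [hausdorff_eq, lintegral_smul_measure,
      ← ofReal_integral_eq_lintegral_ofReal hJi (Eventually.of_forall hJ0), hJint,
      ENNReal.ofReal_mul (p := (hausdorffConst m : ℝ)) (NNReal.coe_nonneg _),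
      ENNReal.ofReal_coe_nnreal, ENNReal.smul_def, smul_eq_mul]
  have hδ' : 0 < 1 - δ := sub_pos.2 hδ1
  have := lintegral_bilip (P := P) (M := M) P.continuous m (1 / (1 - δ)).toNNReal
    (LipschitzWith.of_dist_le_mul fun x y => by
      rw [dist_eq_norm, dist_eq_norm, ← map_sub]; simpa using hP1 (x - y))
    (fun x hx y hy => by
      have h1 := happ x hx.2 y hy.2
      have h2 : f x = 0 := hx.1
      have h3 : f y = 0 := hy.1
      rw [h2, h3, sub_zero, zero_sub, abs_neg, abs_mul, abs_of_pos ha, mul_comm δ a, mul_assoc] at h1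
      have h4 := le_of_mul_le_mul_left h1 ha
      have h5 := hP2 (x - y)
      rw [Real.coe_toNNReal _ (by positivity), dist_eq_norm, dist_eq_norm, ← map_sub,
        one_div, inv_mul_eq_div, le_div_iff₀ hδ']
      linarith)
    (J := fun y => ENNReal.ofReal (J y)) hJm.ennreal_ofReal
    (fun y hy => by simp [hJ2 y hy])
  rw [hZ, ← hJH]
  refine ⟨this.1, ?_⟩
  rw [ENNReal.ofReal_pow (by positivity)]
  exact this.2

/-! ### The surface formula away from critical points -/

/-- `-1/2 ∫ sgn f · div (ψ ∇f)`: up to the factor `hausdorffConst`, the integral of `ψ ‖∇f‖` over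
the nodal set of `f`, see `nodal_eq`. -/
def surf {n : ℕ} (f ψ : EuclideanSpace ℝ (Fin n) → ℝ) : ℝ :=
  -(1/2) * ∫ x, Real.sign (f x) * ∑ i, pd i (fun y => ψ y * pd i f y) x

section Surf
variable {n : ℕ} {f ψ : EuclideanSpace ℝ (Fin n) → ℝ}

lemma div_integrable (hf : ContDiff ℝ ∞ f) (hψ : ContDiff ℝ ∞ ψ) (hψc : HasCompactSupport ψ) :
    Integrable (fun x => ∑ i, pd i (fun y => ψ y * pd i f y) x) :=
  integrable_finsetSum _ fun i _ =>
    (pd_smooth (hψ.mul (pd_smooth hf i)) i).continuous.integrable_of_hasCompactSupport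
      (pd_compact hψc.mul_right i)

/-- If `A ψ ∂ₑf + B ψ ‖∇f‖² ≥ 0` pointwise, the same inequality holds between the integrals
`-1/2 ∫ sgn f ∂ₑψ` and `surf f ψ`: this is `sign_div_nonpos` for `ψ (A e + B ∇f)`. -/
lemma surf_compare (hf : ContDiff ℝ ∞ f) (hψ : ContDiff ℝ ∞ ψ) (hψc : HasCompactSupport ψ)
    (e : EuclideanSpace ℝ (Fin n)) (A B : ℝ)
    (h : ∀ x, 0 ≤ ψ x * (A * fderiv ℝ f x e + B * ‖gradient f x‖ ^ 2)) :
    0 ≤ A * (-(1/2) * ∫ x, Real.sign (f x) * fderiv ℝ ψ x e) + B * surf f ψ := by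
  let u : Fin n → EuclideanSpace ℝ (Fin n) → ℝ :=
    fun i x => (A * e i) * ψ x - (-B) * (ψ x * pd i f x)
  have hu1 : ∀ i, ContDiff ℝ ∞ (fun x => ψ x * pd i f x) := fun i => hψ.mul (pd_smooth hf i)
  have hu : ∀ i, ContDiff ℝ ∞ (u i) := fun i =>
    (contDiff_const.mul hψ).sub (contDiff_const.mul (hu1 i))
  have huc : ∀ i, HasCompactSupport (u i) := fun i =>
    hψc.mul_left.sub (hψc.mul_right.mul_left)
  have hpd : ∀ x, ∑ i, pd i (u i) x =
      A * fderiv ℝ ψ x e + B * ∑ i, pd i (fun y => ψ y * pd i f y) x := by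
    intro x
    rw [fderiv_eq_sum, Finset.mul_sum, Finset.mul_sum, ← Finset.sum_add_distrib]
    refine Finset.sum_congr rfl fun i _ => ?_
    simp only [u]
    rw [pd_sub (smooth_diff (contDiff_const.mul hψ)) (smooth_diff (contDiff_const.mul (hu1 i))),
      pd_const_mul (smooth_diff hψ), pd_const_mul (smooth_diff (hu1 i))]
    ring
  have := sign_div_nonpos hu huc hf (fun x => by
    convert h x using 1
    rw [norm_gradient_sq, fderiv_eq_sum, Finset.mul_sum, Finset.mul_sum, ← Finset.sum_add_distrib,
      Finset.mul_sum]
    refine Finset.sum_congr rfl fun i _ => ?_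
    simp only [u]; ring)
  simp only [hpd] at this
  have i1 : Integrable (fun x => Real.sign (f x) * fderiv ℝ ψ x e) :=
    sign_mul_integrable hf.continuous
      (((hψ.continuous_fderiv (by simp)).clm_apply
        continuous_const).integrable_of_hasCompactSupport (hψc.fderiv_apply (𝕜 := ℝ) e))
  have i2 := sign_mul_integrable hf.continuous (div_integrable hf hψ hψc)
  have e1 : ∫ x, Real.sign (f x) *
      (A * fderiv ℝ ψ x e + B * ∑ i, pd i (fun y => ψ y * pd i f y) x) =
      A * (∫ x, Real.sign (f x) * fderiv ℝ ψ x e) +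
      B * ∫ x, Real.sign (f x) * ∑ i, pd i (fun y => ψ y * pd i f y) x := by
    rw [← integral_const_mul, ← integral_const_mul, ← integral_add (i1.const_mul _)
      (i2.const_mul _)]
    refine integral_congr_ae (Eventually.of_forall fun x => ?_)
    simp only; ring
  rw [e1] at this
  unfold surf
  linarith

lemma surf_nonneg (hf : ContDiff ℝ ∞ f) (hψ : ContDiff ℝ ∞ ψ) (hψc : HasCompactSupport ψ)
    (hψ0 : ∀ x, 0 ≤ ψ x) : 0 ≤ surf f ψ := by
  simpa using surf_compare hf hψ hψc 0 0 1 (fun x => by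
    simpa using mul_nonneg (hψ0 x) (sq_nonneg ‖gradient f x‖))

lemma surf_sum (hf : ContDiff ℝ ∞ f) {ι : Type*} (s : Finset ι)
    {ψ : ι → EuclideanSpace ℝ (Fin n) → ℝ} (hψ : ∀ j, ContDiff ℝ ∞ (ψ j))
    (hψc : ∀ j, HasCompactSupport (ψ j)) :
    surf f (fun x => ∑ j ∈ s, ψ j x) = ∑ j ∈ s, surf f (ψ j) := by
  unfold surf
  rw [← Finset.mul_sum, ← integral_finsetSum _ fun j _ =>
    sign_mul_integrable hf.continuous (div_integrable hf (hψ j) (hψc j))]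
  congr 2
  ext x
  rw [← Finset.mul_sum, Finset.sum_comm]
  congr 1
  refine Finset.sum_congr rfl fun i _ => ?_
  simp only [Finset.sum_mul]
  exact pd_sum s (fun j _ => smooth_diff ((hψ j).mul (pd_smooth hf i))) x

end Surf

/-- The integral of `ψ ‖∇f‖` over the nodal set of `f` in `ℝᵐ⁺¹`, for `ψ ≥ 0`. It is a lower
Lebesgue integral, so that finiteness need not be known beforehand. -/
def nodal {m : ℕ} (f ψ : EuclideanSpace ℝ (Fin (m + 1)) → ℝ) : ℝ≥0∞ :=
  ∫⁻ x in {x | f x = 0}, ENNReal.ofReal (ψ x * ‖gradient f x‖) ∂μH[m]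

lemma exists_delta (m : ℕ) {Θ : ℝ} (hΘ : 1 < Θ) :
    ∃ δ : ℝ, 0 < δ ∧ δ < 1 ∧ (1 + δ) ^ 2 / (1 - δ) ^ (m + 2) ≤ Θ := by
  have hc : ContinuousAt (fun δ : ℝ => (1 + δ) ^ 2 / (1 - δ) ^ (m + 2)) 0 :=
    ContinuousAt.div (by fun_prop) (by fun_prop) (by simp)
  have h1 : ∀ᶠ δ in 𝓝 (0:ℝ), (1 + δ) ^ 2 / (1 - δ) ^ (m + 2) < Θ :=
    hc.eventually (gt_mem_nhds (by simpa using hΘ))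
  have h2 : ∀ᶠ δ in 𝓝[>] (0:ℝ), (1 + δ) ^ 2 / (1 - δ) ^ (m + 2) < Θ := h1.filter_mono
    nhdsWithin_le_nhds
  have h3 : ∀ᶠ δ in 𝓝[>] (0:ℝ), δ ∈ Ioo (0:ℝ) 1 := Ioo_mem_nhdsGT one_pos
  obtain ⟨δ, h, h'⟩ := (h2.and h3).exists
  exact ⟨δ, h'.1, h'.2, h.le⟩

/-- Near a regular point, `nodal` and `surf` agree up to a factor arbitrarily close to `1`. -/
lemma local_compare {m : ℕ} {f : EuclideanSpace ℝ (Fin (m + 1)) → ℝ} (hf : ContDiff ℝ ∞ f)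
    {p : EuclideanSpace ℝ (Fin (m + 1))} (hp : gradient f p ≠ 0) {Θ : ℝ} (hΘ : 1 < Θ) :
    ∃ r > 0, ∀ ψ : EuclideanSpace ℝ (Fin (m + 1)) → ℝ, ContDiff ℝ ∞ ψ → HasCompactSupport ψ →
      (∀ x, 0 ≤ ψ x) → tsupport ψ ⊆ Metric.ball p r →
      nodal f ψ ≤ ENNReal.ofReal Θ * ENNReal.ofReal (hausdorffConst m * surf f ψ) ∧
      ENNReal.ofReal (hausdorffConst m * surf f ψ) ≤ ENNReal.ofReal Θ * nodal f ψ := by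
  obtain ⟨δ, hδ, hδ1, hδΘ⟩ := exists_delta m hΘ
  have hδ' : 0 < 1 - δ := sub_pos.2 hδ1
  set a := ‖gradient f p‖ with ha
  have ha0 : 0 < a := norm_pos_iff.2 hp
  set e := a⁻¹ • gradient f p with he
  have he1 : ‖e‖ = 1 := by rw [he, norm_smul, norm_inv, norm_norm, inv_mul_cancel₀ ha0.ne']
  have hfd : ∀ x v, fderiv ℝ f x v = inner ℝ (gradient f x) v := fun x v => by
    simp [gradient]
  have hae : gradient f p = a • e := by rw [he, smul_smul, mul_inv_cancel₀ ha0.ne', one_smul]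
  obtain ⟨s, hs, hs'⟩ := (hf.contDiffAt.hasStrictFDerivAt (x := p)
    (by simp)).approximates_deriv_on_nhds (c := (δ * a).toNNReal)
    (Or.inr (Real.toNNReal_pos.2 (by positivity)))
  have hg1 : ∀ᶠ x in 𝓝 p, ‖gradient f x‖ ∈ Ioo ((1 - δ) * a) ((1 + δ) * a) :=
    (continuous_gradient hf).norm.continuousAt.eventually
      (Ioo_mem_nhds (by nlinarith) (by nlinarith))
  have hg2 : ∀ᶠ x in 𝓝 p, fderiv ℝ f x e ∈ Ioo ((1 - δ) * a) ((1 + δ) * a) := by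
    have hc : Continuous (fun x => fderiv ℝ f x e) :=
      (hf.continuous_fderiv (by simp)).clm_apply continuous_const
    have h0 : fderiv ℝ f p e = a := by
      rw [hfd, hae, inner_smul_left, real_inner_self_eq_norm_sq, he1]; simp
    exact hc.continuousAt.eventually
      (Ioo_mem_nhds (by show _ < fderiv ℝ f p e; rw [h0]; nlinarith)
        (by show fderiv ℝ f p e < _; rw [h0]; nlinarith))
  obtain ⟨r, hr, hball⟩ := Metric.eventually_nhds_iff_ball.1 ((hg1.and hg2).and hs)
  refine ⟨r, hr, fun ψ hψ hψc hψ0 hsupp => ?_⟩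
  have happ : ∀ x ∈ Metric.ball p r, ∀ y ∈ Metric.ball p r,
      |f x - f y - a * inner ℝ e (x - y)| ≤ δ * a * ‖x - y‖ := fun x hx y hy => by
    have := hs' x (hball x hx).2 y (hball y hy).2
    rw [Real.coe_toNNReal _ (by positivity), hfd, hae, inner_smul_left] at this
    simpa using this
  obtain ⟨hZ1, hZ2⟩ := slice_compare hf.continuous he1 ha0 hδ1 happ hψ hψc hψ0 hsupp
  set Λ := -(1/2) * ∫ x, Real.sign (f x) * fderiv ℝ ψ x e with hΛ
  set Z := ∫⁻ x in {x | f x = 0}, ENNReal.ofReal (ψ x) ∂μH[m] with hZ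
  have hoff : ∀ x, x ∉ Metric.ball p r → ψ x = 0 := fun x hx =>
    image_eq_zero_of_notMem_tsupport fun h => hx (hsupp h)
  have hc0 : (0:ℝ) ≤ hausdorffConst m := NNReal.coe_nonneg _
  have hL1 : surf f ψ ≤ (1 + δ) ^ 2 / (1 - δ) * a * Λ := by
    have := surf_compare hf hψ hψc e ((1 + δ) ^ 2 / (1 - δ) * a) (-1) (fun x => by
      by_cases hx : x ∈ Metric.ball p r
      · refine mul_nonneg (hψ0 x) ?_
        obtain ⟨⟨h1, h2⟩, -⟩ := hball x hx
        have h3 : (1 + δ) ^ 2 / (1 - δ) * a * ((1 - δ) * a) ≤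
            (1 + δ) ^ 2 / (1 - δ) * a * fderiv ℝ f x e := by
          gcongr; exact h2.1.le
        have h4 : (1 + δ) ^ 2 / (1 - δ) * a * ((1 - δ) * a) = ((1 + δ) * a) ^ 2 := by
          field_simp
        have h5 : ‖gradient f x‖ ^ 2 ≤ ((1 + δ) * a) ^ 2 := by
          gcongr; exact h1.2.le
        linarith
      · simp [hoff x hx])
    rw [← hΛ] at this
    linarith
  have hL2 : (1 - δ) ^ 2 / (1 + δ) * a * Λ ≤ surf f ψ := by
    have := surf_compare hf hψ hψc e (-((1 - δ) ^ 2 / (1 + δ) * a)) 1 (fun x => by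
      by_cases hx : x ∈ Metric.ball p r
      · refine mul_nonneg (hψ0 x) ?_
        obtain ⟨⟨h1, h2⟩, -⟩ := hball x hx
        have h3 : (1 - δ) ^ 2 / (1 + δ) * a * fderiv ℝ f x e ≤
            (1 - δ) ^ 2 / (1 + δ) * a * ((1 + δ) * a) := by
          gcongr; exact h2.2.le
        have h4 : (1 - δ) ^ 2 / (1 + δ) * a * ((1 + δ) * a) = ((1 - δ) * a) ^ 2 := by
          field_simp
        have h5 : ((1 - δ) * a) ^ 2 ≤ ‖gradient f x‖ ^ 2 := by
          gcongr; exact h1.1.le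
        linarith
      · simp [hoff x hx])
    rw [← hΛ] at this
    linarith
  have hI1 : ENNReal.ofReal ((1 - δ) * a) * Z ≤ nodal f ψ := by
    rw [hZ, ← lintegral_const_mul _ hψ.continuous.measurable.ennreal_ofReal]
    refine lintegral_mono fun x => ?_
    rw [← ENNReal.ofReal_mul (by positivity)]
    refine ENNReal.ofReal_le_ofReal ?_
    by_cases hx : x ∈ Metric.ball p r
    · rw [mul_comm]
      exact mul_le_mul_of_nonneg_left (hball x hx).1.1.1.le (hψ0 x)
    · simp [hoff x hx]
  have hI2 : nodal f ψ ≤ ENNReal.ofReal ((1 + δ) * a) * Z := by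
    rw [hZ, ← lintegral_const_mul _ hψ.continuous.measurable.ennreal_ofReal]
    refine lintegral_mono fun x => ?_
    rw [← ENNReal.ofReal_mul (by positivity)]
    refine ENNReal.ofReal_le_ofReal ?_
    by_cases hx : x ∈ Metric.ball p r
    · rw [mul_comm _ (ψ x)]
      exact mul_le_mul_of_nonneg_left (hball x hx).1.1.2.le (hψ0 x)
    · simp [hoff x hx]
  have hS0 := surf_nonneg hf hψ hψc hψ0
  constructor
  · calc nodal f ψ ≤ ENNReal.ofReal ((1 + δ) * a) * (ENNReal.ofReal ((1 / (1 - δ)) ^ m) *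
          ENNReal.ofReal (hausdorffConst m * Λ)) := hI2.trans (mul_le_mul_right hZ2 _)
      _ = ENNReal.ofReal ((1 + δ) * a * (1 / (1 - δ)) ^ m * (hausdorffConst m * Λ)) := by
          rw [← mul_assoc, ← ENNReal.ofReal_mul (by positivity), ← ENNReal.ofReal_mul (by positivity)]
      _ ≤ ENNReal.ofReal (Θ * (hausdorffConst m * surf f ψ)) := by
          refine ENNReal.ofReal_le_ofReal ?_
          have h1 : (1 + δ) * a * (1 / (1 - δ)) ^ m * (hausdorffConst m * Λ) =
              (1 + δ) ^ 2 / (1 - δ) ^ (m + 2) *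
                (hausdorffConst m * ((1 - δ) ^ 2 / (1 + δ) * a * Λ)) := by
            rw [one_div, inv_pow, pow_add]
            field_simp
          rw [h1]
          have h2 : hausdorffConst m * ((1 - δ) ^ 2 / (1 + δ) * a * Λ) ≤
              hausdorffConst m * surf f ψ := mul_le_mul_of_nonneg_left hL2 hc0
          calc _ ≤ (1 + δ) ^ 2 / (1 - δ) ^ (m + 2) * (hausdorffConst m * surf f ψ) :=
                mul_le_mul_of_nonneg_left h2 (by positivity)
            _ ≤ _ := mul_le_mul_of_nonneg_right hδΘ (by positivity)
      _ = _ := ENNReal.ofReal_mul (by positivity)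
  · have hΘ2 : (1 + δ) ^ 2 / (1 - δ) ^ 2 ≤ Θ := by
      refine le_trans ?_ hδΘ
      exact div_le_div_of_nonneg_left (sq_nonneg _) (by positivity)
        (pow_le_pow_of_le_one hδ'.le (by linarith) (by omega : 2 ≤ m + 2))
    calc ENNReal.ofReal (hausdorffConst m * surf f ψ)
        ≤ ENNReal.ofReal ((1 + δ) ^ 2 / (1 - δ) ^ 2 * ((1 - δ) * a) * (hausdorffConst m * Λ)) := by
          refine ENNReal.ofReal_le_ofReal ?_
          calc _ ≤ hausdorffConst m * ((1 + δ) ^ 2 / (1 - δ) * a * Λ) :=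
                mul_le_mul_of_nonneg_left hL1 hc0
            _ = _ := by field_simp
      _ = ENNReal.ofReal ((1 + δ) ^ 2 / (1 - δ) ^ 2) * (ENNReal.ofReal ((1 - δ) * a) *
            ENNReal.ofReal (hausdorffConst m * Λ)) := by
          rw [ENNReal.ofReal_mul (by positivity), ENNReal.ofReal_mul (by positivity), mul_assoc]
      _ ≤ ENNReal.ofReal Θ * (ENNReal.ofReal ((1 - δ) * a) * Z) := by
          gcongr
      _ ≤ _ := by gcongr

open scoped Manifold in
/-- A nonnegative `ψ ∈ C_c^∞` is a finite sum of such functions, each supported in one of the balls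
`B(p, r p)`. -/
lemma exists_partition {n : ℕ} {ψ : EuclideanSpace ℝ (Fin n) → ℝ} (hψ : ContDiff ℝ ∞ ψ)
    (hψc : HasCompactSupport ψ) (hψ0 : ∀ x, 0 ≤ ψ x)
    (r : EuclideanSpace ℝ (Fin n) → ℝ) (hr : ∀ x ∈ tsupport ψ, 0 < r x) :
    ∃ (s : Finset (EuclideanSpace ℝ (Fin n)))
      (χ : EuclideanSpace ℝ (Fin n) → EuclideanSpace ℝ (Fin n) → ℝ),
      (∀ p ∈ s, p ∈ tsupport ψ) ∧ (∀ p, ContDiff ℝ ∞ (χ p)) ∧ (∀ p, HasCompactSupport (χ p)) ∧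
      (∀ p x, 0 ≤ χ p x) ∧ (∀ p ∈ s, tsupport (χ p) ⊆ Metric.ball p (r p)) ∧
      ∀ x, ψ x = ∑ p ∈ s, χ p x := by
  classical
  obtain ⟨s, hs, hcov⟩ := hψc.isCompact.elim_nhds_subcover (fun p => Metric.ball p (r p))
    (fun x hx => Metric.ball_mem_nhds x (hr x hx))
  obtain ⟨g, hg⟩ := SmoothPartitionOfUnity.exists_isSubordinate (𝓘(ℝ, EuclideanSpace ℝ (Fin n)))
    (isClosed_tsupport ψ) (fun p : s => Metric.ball p.1 (r p.1)) (fun p => Metric.isOpen_ball)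
    (by rw [iUnion_subtype]; exact hcov)
  let χ : EuclideanSpace ℝ (Fin n) → EuclideanSpace ℝ (Fin n) → ℝ :=
    fun p x => if h : p ∈ s then g ⟨p, h⟩ x * ψ x else 0
  refine ⟨s, χ, hs, fun p => ?_, fun p => ?_, fun p x => ?_, fun p hp => ?_, fun x => ?_⟩
  · by_cases h : p ∈ s
    · simp only [χ, h, dif_pos]
      exact ((g ⟨p, h⟩).contMDiff.contDiff).mul hψ
    · simp only [χ, h, dif_neg, not_false_eq_true]; exact contDiff_const
  · by_cases h : p ∈ s
    · simp only [χ, h, dif_pos]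
      exact hψc.mul_left
    · simp only [χ, h, dif_neg, not_false_eq_true]; exact HasCompactSupport.zero
  · simp only [χ]
    split_ifs with h
    · exact mul_nonneg (g.nonneg _ _) (hψ0 x)
    · exact le_rfl
  · simp only [χ, hp, dif_pos]
    exact (tsupport_mul_subset_left).trans (hg ⟨p, hp⟩)
  · have e1 : ∑ p ∈ s, χ p x = ∑ p : s, g p x * ψ x := by
      rw [← Finset.sum_attach]
      simp [χ]
    rw [e1, ← Finset.sum_mul]
    by_cases hx : x ∈ tsupport ψ
    · have := g.sum_eq_one hx
      rw [finsum_eq_sum_of_fintype] at this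
      rw [this, one_mul]
    · simp [image_eq_zero_of_notMem_tsupport hx]

lemma nodal_sum {m : ℕ} {f : EuclideanSpace ℝ (Fin (m + 1)) → ℝ} (hf : ContDiff ℝ ∞ f)
    {ι : Type*} (s : Finset ι) {χ : ι → EuclideanSpace ℝ (Fin (m + 1)) → ℝ}
    (hχ : ∀ j, Continuous (χ j)) (h0 : ∀ j x, 0 ≤ χ j x) :
    nodal f (fun x => ∑ j ∈ s, χ j x) = ∑ j ∈ s, nodal f (χ j) := by
  unfold nodal
  rw [← lintegral_finsetSum]
  · refine lintegral_congr fun x => ?_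
    rw [Finset.sum_mul, ENNReal.ofReal_sum_of_nonneg]
    exact fun j _ => mul_nonneg (h0 j x) (norm_nonneg _)
  · exact fun j _ => ((hχ j).mul (continuous_gradient hf).norm).measurable.ennreal_ofReal

/-- The surface formula for test functions supported away from the critical points of `f`. -/
lemma nodal_eq_of_regular {m : ℕ} {f ψ : EuclideanSpace ℝ (Fin (m + 1)) → ℝ}
    (hf : ContDiff ℝ ∞ f) (hψ : ContDiff ℝ ∞ ψ) (hψc : HasCompactSupport ψ) (hψ0 : ∀ x, 0 ≤ ψ x)
    (hreg : ∀ x ∈ tsupport ψ, gradient f x ≠ 0) :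
    nodal f ψ = ENNReal.ofReal (hausdorffConst m * surf f ψ) := by
  have key : ∀ Θ : ℝ, 1 < Θ →
      nodal f ψ ≤ ENNReal.ofReal Θ * ENNReal.ofReal (hausdorffConst m * surf f ψ) ∧
      ENNReal.ofReal (hausdorffConst m * surf f ψ) ≤ ENNReal.ofReal Θ * nodal f ψ := by
    intro Θ hΘ
    have hex : ∀ p, ∃ r : ℝ, p ∈ tsupport ψ → 0 < r ∧
        ∀ ψ : EuclideanSpace ℝ (Fin (m + 1)) → ℝ, ContDiff ℝ ∞ ψ → HasCompactSupport ψ →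
        (∀ x, 0 ≤ ψ x) → tsupport ψ ⊆ Metric.ball p r →
        nodal f ψ ≤ ENNReal.ofReal Θ * ENNReal.ofReal (hausdorffConst m * surf f ψ) ∧
        ENNReal.ofReal (hausdorffConst m * surf f ψ) ≤ ENNReal.ofReal Θ * nodal f ψ := by
      intro p
      by_cases hp : p ∈ tsupport ψ
      · obtain ⟨r, hr, h⟩ := local_compare hf (hreg p hp) hΘ
        exact ⟨r, fun _ => ⟨hr, h⟩⟩
      · exact ⟨0, fun h => absurd h hp⟩
    choose r hr using hex
    obtain ⟨s, χ, hs, hχ, hχc, hχ0, hχs, hsum⟩ :=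
      exists_partition hψ hψc hψ0 r (fun x hx => (hr x hx).1)
    have hψe : ψ = fun x => ∑ p ∈ s, χ p x := funext hsum
    have hS : ENNReal.ofReal (hausdorffConst m * surf f ψ) =
        ∑ p ∈ s, ENNReal.ofReal (hausdorffConst m * surf f (χ p)) := by
      rw [← ENNReal.ofReal_sum_of_nonneg, ← Finset.mul_sum, ← surf_sum hf s hχ hχc, ← hψe]
      exact fun p _ => mul_nonneg (NNReal.coe_nonneg _) (surf_nonneg hf (hχ p) (hχc p) (hχ0 p))
    have hN : nodal f ψ = ∑ p ∈ s, nodal f (χ p) := by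
      rw [← nodal_sum hf s (fun p => (hχ p).continuous) hχ0, ← hψe]
    rw [hS, hN, Finset.mul_sum, Finset.mul_sum]
    exact ⟨Finset.sum_le_sum fun p hp =>
        ((hr p (hs p hp)).2 _ (hχ p) (hχc p) (hχ0 p) (hχs p hp)).1,
      Finset.sum_le_sum fun p hp =>
        ((hr p (hs p hp)).2 _ (hχ p) (hχc p) (hχ0 p) (hχs p hp)).2⟩
  have hlim : ∀ b : ℝ≥0∞, Tendsto (fun Θ : ℝ => ENNReal.ofReal Θ * b) (𝓝[>] 1) (𝓝 b) := by
    intro b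
    have h1 : Tendsto (fun Θ : ℝ => ENNReal.ofReal Θ) (𝓝[>] 1) (𝓝 1) := by
      have := (ENNReal.continuous_ofReal.tendsto 1).mono_left
        (nhdsWithin_le_nhds (s := Ioi (1:ℝ)))
      simpa using this
    simpa using ENNReal.Tendsto.mul_const h1 (Or.inl one_ne_zero)
  refine le_antisymm (ge_of_tendsto (hlim _) ?_) (ge_of_tendsto (hlim _) ?_)
  · filter_upwards [self_mem_nhdsWithin] with Θ hΘ using (key Θ hΘ).1
  · filter_upwards [self_mem_nhdsWithin] with Θ hΘ using (key Θ hΘ).2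

/-! ### Removing the critical points -/

lemma deriv_smoothTransition_eq_zero {t : ℝ} (ht : t ≤ 0 ∨ 1 ≤ t) :
    deriv Real.smoothTransition t = 0 := by
  rcases ht with h | h
  · refine IsLocalMin.deriv_eq_zero (Eventually.of_forall fun s => ?_)
    rw [Real.smoothTransition.zero_of_nonpos h]
    exact Real.smoothTransition.nonneg s
  · refine IsLocalMax.deriv_eq_zero (Eventually.of_forall fun s => ?_)
    rw [Real.smoothTransition.one_of_one_le h]
    exact Real.smoothTransition.le_one s

lemma smoothTransition_smooth : ContDiff ℝ ∞ Real.smoothTransition :=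
  Real.smoothTransition.contDiff

lemma exists_deriv_smoothTransition_bound :
    ∃ M : ℝ, 0 ≤ M ∧ ∀ t, |deriv Real.smoothTransition t| ≤ M := by
  obtain ⟨C, hC⟩ := isCompact_Icc.exists_bound_of_continuousOn (s := Icc (0:ℝ) 1)
    (smoothTransition_smooth.continuous_deriv (by simp)).continuousOn
  refine ⟨max C 0, le_max_right _ _, fun t => ?_⟩
  by_cases ht : t ∈ Icc (0:ℝ) 1
  · exact (hC t ht).trans (le_max_left _ _)
  · rw [deriv_smoothTransition_eq_zero, abs_zero]
    · exact le_max_right _ _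
    · rw [mem_Icc, not_and_or] at ht
      rcases ht with h | h
      · exact Or.inl (not_le.1 h).le
      · exact Or.inr (not_le.1 h).le

section Cutoff
variable {n : ℕ} {f ψ : EuclideanSpace ℝ (Fin n) → ℝ}

/-- The squared length of the gradient, `Σᵢ (∂ᵢf)²`. -/
def gradSq (f : EuclideanSpace ℝ (Fin n) → ℝ) (x : EuclideanSpace ℝ (Fin n)) : ℝ :=
  ∑ i, pd i f x ^ 2

lemma gradSq_smooth (hf : ContDiff ℝ ∞ f) : ContDiff ℝ ∞ (gradSq f) := by
  unfold gradSq
  exact ContDiff.sum fun i _ => (pd_smooth hf i).pow 2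

lemma gradSq_nonneg (x : EuclideanSpace ℝ (Fin n)) : 0 ≤ gradSq f x :=
  Finset.sum_nonneg fun _ _ => sq_nonneg _

lemma abs_pd_le (x : EuclideanSpace ℝ (Fin n)) (i j : Fin n) :
    |pd i f x * pd j f x| ≤ gradSq f x := by
  have h : ∀ i, pd i f x ^ 2 ≤ gradSq f x := fun i =>
    Finset.single_le_sum (f := fun i => pd i f x ^ 2) (fun i _ => sq_nonneg _) (Finset.mem_univ i)
  have h1 := h i
  have h2 := h j
  rw [abs_le]
  constructor <;> nlinarith [sq_nonneg (pd i f x - pd j f x), sq_nonneg (pd i f x + pd j f x)]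

lemma pd_gradSq (hf : ContDiff ℝ ∞ f) (i : Fin n) (x : EuclideanSpace ℝ (Fin n)) :
    pd i (gradSq f) x = ∑ j, 2 * (pd j f x * pd i (pd j f) x) := by
  have e : gradSq f = fun y => ∑ j, pd j f y * pd j f y := by
    ext y; simp [gradSq, sq]
  have hd := fun j => smooth_diff (pd_smooth hf j)
  rw [e, pd_sum (u := fun j y => pd j f y * pd j f y) _ (fun j _ => (hd j).mul (hd j))]
  refine Finset.sum_congr rfl fun j _ => ?_
  rw [pd_mul (hd j) (hd j)]
  ring

/-- `|∇f · ∇|∇f|²| ≤ 2 |∇f|² Σᵢⱼ |∂ᵢ∂ⱼf|`. -/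
lemma abs_grad_gradSq_le (hf : ContDiff ℝ ∞ f) (x : EuclideanSpace ℝ (Fin n)) :
    |∑ i, pd i (gradSq f) x * pd i f x| ≤
      2 * gradSq f x * ∑ i, ∑ j, |pd i (pd j f) x| := by
  rw [Finset.mul_sum]
  refine (Finset.abs_sum_le_sum_abs _ _).trans (Finset.sum_le_sum fun i _ => ?_)
  rw [pd_gradSq hf, Finset.sum_mul, Finset.mul_sum]
  refine (Finset.abs_sum_le_sum_abs _ _).trans (Finset.sum_le_sum fun j _ => ?_)
  have : 2 * (pd j f x * pd i (pd j f) x) * pd i f x =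
      2 * (pd j f x * pd i f x) * pd i (pd j f) x := by ring
  rw [this, abs_mul, abs_mul, abs_two]
  gcongr
  exact abs_pd_le x j i

/-- A smooth cutoff that vanishes where `k |∇f|² ≤ 1` and is `1` where `k |∇f|² ≥ 2`. -/
def cut (f : EuclideanSpace ℝ (Fin n) → ℝ) (k : ℕ) (x : EuclideanSpace ℝ (Fin n)) : ℝ :=
  Real.smoothTransition (k * gradSq f x - 1)

lemma cut_smooth (hf : ContDiff ℝ ∞ f) (k : ℕ) : ContDiff ℝ ∞ (cut f k) :=
  smoothTransition_smooth.comp ((contDiff_const.mul (gradSq_smooth hf)).sub contDiff_const)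

lemma cut_nonneg (k : ℕ) (x : EuclideanSpace ℝ (Fin n)) : 0 ≤ cut f k x :=
  Real.smoothTransition.nonneg _

lemma cut_le_one (k : ℕ) (x : EuclideanSpace ℝ (Fin n)) : cut f k x ≤ 1 :=
  Real.smoothTransition.le_one _

lemma eventually_large {q : ℝ} (hq : 0 < q) : ∀ᶠ k : ℕ in atTop, 1 ≤ (k : ℝ) * q - 1 := by
  have : Tendsto (fun k : ℕ => (k : ℝ) * q) atTop atTop :=
    tendsto_natCast_atTop_atTop.atTop_mul_const hq
  filter_upwards [this.eventually_ge_atTop 2] with k hk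
  linarith

lemma cut_div (hf : ContDiff ℝ ∞ f) (hψ : ContDiff ℝ ∞ ψ) (k : ℕ)
    (x : EuclideanSpace ℝ (Fin n)) :
    ∑ i, pd i (fun y => (ψ y * cut f k y) * pd i f y) x =
      cut f k x * ∑ i, pd i (fun y => ψ y * pd i f y) x +
      ψ x * (deriv Real.smoothTransition (k * gradSq f x - 1) *
        (k * ∑ i, pd i (gradSq f) x * pd i f x)) := by
  have hq := smooth_diff (gradSq_smooth hf)
  have hpd : ∀ i, pd i (cut f k) x =
      deriv Real.smoothTransition (k * gradSq f x - 1) * (k * pd i (gradSq f) x) := by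
    intro i
    unfold cut
    rw [pd_comp (u := fun y => k * gradSq f y - 1) (smoothTransition_smooth.differentiable (by simp))
      ((hq.const_mul _).sub_const _), pd_sub (hq.const_mul _) (differentiable_const _),
      pd_const_mul hq]
    simp [pd]
  simp only [Finset.mul_sum, ← Finset.sum_add_distrib]
  refine Finset.sum_congr rfl fun i _ => ?_
  have e : (fun y => (ψ y * cut f k y) * pd i f y) = fun y => cut f k y * (ψ y * pd i f y) := by
    ext y; ring
  rw [e, pd_mul (smooth_diff (cut_smooth hf k)) (smooth_diff (hψ.mul (pd_smooth hf i))), hpd]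
  ring

/-- The cutoff does not affect `surf` in the limit. The term with the derivative of the cutoff is
bounded because `k |∇f|² ≤ 2` on its support; where `∇f = 0`, the divergence vanishes almost
everywhere. -/
lemma surf_cut_tendsto (hf : ContDiff ℝ ∞ f) (hψ : ContDiff ℝ ∞ ψ) (hψc : HasCompactSupport ψ) :
    Tendsto (fun k : ℕ => surf f (fun x => ψ x * cut f k x)) atTop (𝓝 (surf f ψ)) := by
  obtain ⟨M, hM0, hM⟩ := exists_deriv_smoothTransition_bound
  unfold surf
  refine Tendsto.const_mul _ ?_
  have hH : Continuous (fun x => ∑ i, ∑ j, |pd i (pd j f) x|) :=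
    continuous_finsetSum _ fun i _ => continuous_finsetSum _ fun j _ =>
      (pd_smooth (pd_smooth hf j) i).continuous.abs
  refine tendsto_integral_of_dominated_convergence
    (fun x => |∑ i, pd i (fun y => ψ y * pd i f y) x| +
      |ψ x| * (4 * M * ∑ i, ∑ j, |pd i (pd j f) x|)) (fun k => ?_) ?_ (fun k => ?_) ?_
  · exact (sign_mul_integrable hf.continuous (div_integrable hf (hψ.mul (cut_smooth hf k))
      hψc.mul_right)).aestronglyMeasurable
  · refine (div_integrable hf hψ hψc).abs.add ?_
    refine Continuous.integrable_of_hasCompactSupport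
      (hψ.continuous.abs.mul (continuous_const.mul hH)) ?_
    exact HasCompactSupport.mul_right (hψc.comp_left abs_zero)
  · refine Eventually.of_forall fun x => ?_
    rw [cut_div hf hψ, Real.norm_eq_abs, abs_mul]
    refine (mul_le_of_le_one_left (abs_nonneg _) (abs_sign_le _)).trans
      ((abs_add_le _ _).trans (add_le_add ?_ ?_))
    · rw [abs_mul, abs_of_nonneg (cut_nonneg k x)]
      exact mul_le_of_le_one_left (abs_nonneg _) (cut_le_one k x)
    · rw [abs_mul]
      refine mul_le_mul_of_nonneg_left ?_ (abs_nonneg _)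
      have hHn : 0 ≤ ∑ i, ∑ j, |pd i (pd j f) x| :=
        Finset.sum_nonneg fun i _ => Finset.sum_nonneg fun j _ => abs_nonneg _
      by_cases hk : (k:ℝ) * gradSq f x ≤ 2
      · rw [abs_mul, abs_mul, Nat.abs_cast]
        calc _ ≤ M * (k * (2 * gradSq f x * ∑ i, ∑ j, |pd i (pd j f) x|)) := by
              gcongr
              · exact hM _
              · exact abs_grad_gradSq_le hf x
          _ = M * 2 * (k * gradSq f x) * ∑ i, ∑ j, |pd i (pd j f) x| := by ring
          _ ≤ M * 2 * 2 * ∑ i, ∑ j, |pd i (pd j f) x| := by gcongr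
          _ = _ := by ring
      · rw [deriv_smoothTransition_eq_zero (Or.inr (by linarith)), zero_mul, abs_zero]
        positivity
  · have hz : ∀ᵐ x, ∀ i, pd i f x = 0 → pd i (pd i f) x = 0 :=
      ae_all_iff.2 fun i => pd_ae_zero (pd_smooth hf i) i
    filter_upwards [hz] with x hx
    simp only [cut_div hf hψ]
    rcases (gradSq_nonneg (f := f) x).eq_or_lt with hq | hq
    · have h0 : ∀ i, pd i f x = 0 := fun i => by
        have := abs_pd_le (f := f) x i i
        rw [← hq] at this
        exact mul_self_eq_zero.1 (abs_nonpos_iff.1 this)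
      have hD : ∑ i, pd i (fun y => ψ y * pd i f y) x = 0 := by
        refine Finset.sum_eq_zero fun i _ => ?_
        rw [pd_mul (smooth_diff hψ) (smooth_diff (pd_smooth hf i)), h0 i, hx i (h0 i)]
        simp
      have hT : ∑ i, pd i (gradSq f) x * pd i f x = 0 :=
        Finset.sum_eq_zero fun i _ => by rw [h0 i, mul_zero]
      simp [hD, hT]
    · refine tendsto_const_nhds.congr' ?_
      filter_upwards [eventually_large hq] with k hk
      rw [deriv_smoothTransition_eq_zero (Or.inr hk)]
      unfold cut
      rw [Real.smoothTransition.one_of_one_le hk]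
      ring

end Cutoff

/-- The surface formula `∫_{f = 0} ψ ‖∇f‖ = -c/2 ∫ sgn f · div (ψ ∇f)`, without any regularity
assumption on the nodal set: the critical points contribute nothing to either side. -/
lemma nodal_eq {m : ℕ} {f ψ : EuclideanSpace ℝ (Fin (m + 1)) → ℝ}
    (hf : ContDiff ℝ ∞ f) (hψ : ContDiff ℝ ∞ ψ) (hψc : HasCompactSupport ψ) (hψ0 : ∀ x, 0 ≤ ψ x) :
    nodal f ψ = ENNReal.ofReal (hausdorffConst m * surf f ψ) := by
  have hreg : ∀ k : ℕ, nodal f (fun x => ψ x * cut f k x) =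
      ENNReal.ofReal (hausdorffConst m * surf f (fun x => ψ x * cut f k x)) := by
    intro k
    refine nodal_eq_of_regular hf (hψ.mul (cut_smooth hf k)) hψc.mul_right
      (fun x => mul_nonneg (hψ0 x) (cut_nonneg k x)) fun x hx h => ?_
    have hcl : IsClosed {x | 1 ≤ (k:ℝ) * gradSq f x} :=
      isClosed_le continuous_const (continuous_const.mul (gradSq_smooth hf).continuous)
    have : x ∈ {x | 1 ≤ (k:ℝ) * gradSq f x} := by
      refine closure_minimal (fun y hy => ?_) hcl hx
      by_contra hn
      refine hy ?_
      have : cut f k y = 0 :=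
        Real.smoothTransition.zero_of_nonpos (by
          simp only [mem_ofPred_eq, not_le] at hn; linarith)
      simp [this]
    have h0 : gradSq f x = 0 := by
      have := norm_gradient_sq f x
      rw [h] at this
      simpa [gradSq] using this.symm
    simp only [mem_ofPred_eq, h0, mul_zero] at this
    linarith
  have h1 : Tendsto (fun k : ℕ => nodal f (fun x => ψ x * cut f k x)) atTop (𝓝 (nodal f ψ)) := by
    unfold nodal
    refine lintegral_tendsto_of_tendsto_of_monotone (fun k => ?_) ?_ ?_
    · exact ((hψ.mul (cut_smooth hf k)).continuous.mul
        (continuous_gradient hf).norm).measurable.ennreal_ofReal.aemeasurable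
    · refine Eventually.of_forall fun x k l hkl => ENNReal.ofReal_le_ofReal ?_
      refine mul_le_mul_of_nonneg_right (mul_le_mul_of_nonneg_left ?_ (hψ0 x)) (norm_nonneg _)
      refine Real.smoothTransition.monotone (sub_le_sub_right
        (mul_le_mul_of_nonneg_right ?_ (gradSq_nonneg x)) 1)
      exact_mod_cast hkl
    · refine Eventually.of_forall fun x => ?_
      rcases (gradSq_nonneg (f := f) x).eq_or_lt with hq | hq
      · have h0 : ‖gradient f x‖ = 0 := by
          have := norm_gradient_sq f x
          rw [← gradSq, ← hq] at this
          simpa using this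
        simp [h0]
      · refine tendsto_const_nhds.congr' ?_
        filter_upwards [eventually_large hq] with k hk
        unfold cut
        rw [Real.smoothTransition.one_of_one_le hk, mul_one]
  simp only [hreg] at h1
  exact tendsto_nhds_unique h1
    (ENNReal.continuous_ofReal.continuousAt.tendsto.comp
      ((surf_cut_tendsto hf hψ hψc).const_mul _))

/-! ### The weight `|g|` -/

section SmoothAbs
variable {n : ℕ} {g : EuclideanSpace ℝ (Fin n) → ℝ}

/-- The smooth approximation `√(g² + τ²)` of `|g|`. -/
def sabs (g : EuclideanSpace ℝ (Fin n) → ℝ) (τ : ℝ) (x : EuclideanSpace ℝ (Fin n)) : ℝ :=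
  √(g x ^ 2 + τ ^ 2)

lemma sabs_pos {τ : ℝ} (hτ : 0 < τ) (x : EuclideanSpace ℝ (Fin n)) : 0 < sabs g τ x :=
  Real.sqrt_pos.2 (by positivity)

lemma sabs_smooth (hg : ContDiff ℝ ∞ g) {τ : ℝ} (hτ : 0 < τ) : ContDiff ℝ ∞ (sabs g τ) :=
  ((hg.pow 2).add contDiff_const).sqrt fun x => by positivity

lemma abs_le_sabs (τ : ℝ) (x : EuclideanSpace ℝ (Fin n)) : |g x| ≤ sabs g τ x :=
  Real.le_sqrt_of_sq_le (by rw [sq_abs]; nlinarith [sq_nonneg τ])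

lemma sabs_mono {τ σ : ℝ} (hτ : 0 < τ) (h : τ ≤ σ) (x : EuclideanSpace ℝ (Fin n)) :
    sabs g τ x ≤ sabs g σ x :=
  Real.sqrt_le_sqrt (by gcongr)

lemma pd_sabs (hg : ContDiff ℝ ∞ g) {τ : ℝ} (hτ : 0 < τ) (i : Fin n)
    (x : EuclideanSpace ℝ (Fin n)) : pd i (sabs g τ) x = g x / sabs g τ x * pd i g x := by
  have hs := smooth_diff (sabs_smooth hg hτ)
  have hgd := smooth_diff hg
  have e : (fun y => sabs g τ y * sabs g τ y) = fun y => g y * g y - -τ ^ 2 := by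
    ext y
    rw [sabs, Real.mul_self_sqrt (by positivity)]
    ring
  have h : pd i (fun y => sabs g τ y * sabs g τ y) x = pd i (fun y => g y * g y - -τ ^ 2) x := by
    rw [e]
  rw [pd_mul hs hs, pd_sub (u := fun y => g y * g y) (hgd.mul hgd) (differentiable_const _)] at h
  have h2 : pd i (fun y => g y * g y) x = g x * pd i g x + g x * pd i g x := pd_mul hgd hgd x
  have h3 : pd i (fun _ : EuclideanSpace ℝ (Fin n) => -τ ^ 2) x = 0 := by simp [pd]
  rw [h2, h3] at h
  have := sabs_pos (g := g) hτ x
  field_simp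
  linarith

lemma abs_div_sabs_le {τ : ℝ} (hτ : 0 < τ) (x : EuclideanSpace ℝ (Fin n)) :
    |g x / sabs g τ x| ≤ 1 := by
  rw [abs_div, abs_of_pos (sabs_pos hτ x)]
  exact div_le_one_of_le₀ (abs_le_sabs τ x) (sabs_pos hτ x).le

lemma sabs_tendsto (x : EuclideanSpace ℝ (Fin n)) :
    Tendsto (fun k : ℕ => sabs g (1 / ((k:ℝ) + 1)) x) atTop (𝓝 |g x|) := by
  have h : Tendsto (fun k : ℕ => √(g x ^ 2 + (1 / ((k:ℝ) + 1)) ^ 2)) atTop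
      (𝓝 (√(g x ^ 2 + 0 ^ 2))) :=
    (Real.continuous_sqrt.tendsto _).comp
      (tendsto_const_nhds.add (tendsto_one_div_add_atTop_nhds_zero_nat.pow 2))
  simpa [Real.sqrt_sq_eq_abs, sabs] using h

lemma div_sabs_tendsto (x : EuclideanSpace ℝ (Fin n)) :
    Tendsto (fun k : ℕ => g x / sabs g (1 / ((k:ℝ) + 1)) x) atTop (𝓝 (Real.sign (g x))) := by
  rcases lt_trichotomy (g x) 0 with h | h | h
  · have := (tendsto_const_nhds (x := g x)).div (sabs_tendsto (g := g) x) (abs_ne_zero.2 h.ne)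
    rwa [abs_of_neg h, div_neg, div_self h.ne, ← Real.sign_of_neg h] at this
  · simp [h]
  · have := (tendsto_const_nhds (x := g x)).div (sabs_tendsto (g := g) x) (abs_ne_zero.2 h.ne')
    rw [abs_of_pos h, div_self h.ne'] at this
    rwa [Real.sign_of_pos h]

end SmoothAbs

lemma sign_mul_self_eq_abs (t : ℝ) : Real.sign t * t = |t| := by
  rcases lt_trichotomy t 0 with h | h | h
  · rw [Real.sign_of_neg h, abs_of_neg h]; ring
  · simp [h]
  · rw [Real.sign_of_pos h, abs_of_pos h]; ring

section Limit
variable {n : ℕ} {f g χ : EuclideanSpace ℝ (Fin n) → ℝ} {lam : ℝ}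

/-- `λ²|f||g| - sgn f sgn g ∇f·∇g`, an expression symmetric in `f` and `g`. -/
def symDensity (lam : ℝ) (f g : EuclideanSpace ℝ (Fin n) → ℝ) (x : EuclideanSpace ℝ (Fin n)) : ℝ :=
  lam ^ 2 * (|f x| * |g x|) - Real.sign (f x) * (Real.sign (g x) * ∑ i, pd i f x * pd i g x)

/-- The `i`-th component `|g| sgn f ∂ᵢf` of the vector field paired with the gradient of the
cutoff. -/
def fluxDensity (f g : EuclideanSpace ℝ (Fin n) → ℝ) (i : Fin n)
    (x : EuclideanSpace ℝ (Fin n)) : ℝ :=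
  Real.sign (f x) * (|g x| * pd i f x)

lemma div_sabs (hf : ContDiff ℝ ∞ f) (hg : ContDiff ℝ ∞ g) (hχ : ContDiff ℝ ∞ χ)
    (hlap : ∀ x, lap f x = -lam ^ 2 * f x) {τ : ℝ} (hτ : 0 < τ) (x : EuclideanSpace ℝ (Fin n)) :
    ∑ i, pd i (fun y => (χ y * sabs g τ y) * pd i f y) x =
      χ x * (g x / sabs g τ x * (∑ i, pd i f x * pd i g x) - lam ^ 2 * (sabs g τ x * f x)) +
      sabs g τ x * ∑ i, pd i χ x * pd i f x := by
  have hl : ∑ i, pd i (pd i f) x = -lam ^ 2 * f x := hlap x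
  have hs := sabs_smooth hg hτ
  have h : ∀ i, pd i (fun y => (χ y * sabs g τ y) * pd i f y) x =
      χ x * (g x / sabs g τ x) * (pd i f x * pd i g x) + χ x * sabs g τ x * pd i (pd i f) x +
      sabs g τ x * (pd i χ x * pd i f x) := by
    intro i
    rw [pd_mul (smooth_diff (hχ.mul hs)) (smooth_diff (pd_smooth hf i)),
      pd_mul (smooth_diff hχ) (smooth_diff hs), pd_sabs hg hτ]
    ring
  simp only [h, Finset.sum_add_distrib, ← Finset.mul_sum, hl]
  ring

lemma symDensity_mul_integrable (hf : ContDiff ℝ ∞ f) (hg : ContDiff ℝ ∞ g)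
    (hχ : ContDiff ℝ ∞ χ) (hχc : HasCompactSupport χ) :
    Integrable (fun x => χ x * symDensity lam f g x) := by
  have hG : Continuous (fun x => ∑ i, pd i f x * pd i g x) := continuous_finsetSum _ fun i _ =>
    (pd_smooth hf i).continuous.mul (pd_smooth hg i).continuous
  have h1 : Integrable (fun x => χ x * (lam ^ 2 * (|f x| * |g x|))) :=
    (hχ.continuous.mul (continuous_const.mul
      (hf.continuous.abs.mul hg.continuous.abs))).integrable_of_hasCompactSupport hχc.mul_right
  have h2 := sign_mul_integrable hf.continuous (sign_mul_integrable hg.continuous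
    ((hχ.continuous.mul hG).integrable_of_hasCompactSupport hχc.mul_right))
  refine (h1.sub h2).congr (Eventually.of_forall fun x => ?_)
  simp only [Pi.sub_apply, Pi.mul_apply, symDensity]
  ring

lemma fluxDensity_mul_integrable (hf : ContDiff ℝ ∞ f) (hg : ContDiff ℝ ∞ g)
    (hχ : Continuous χ) (hχc : HasCompactSupport χ) (i : Fin n) :
    Integrable (fun x => χ x * fluxDensity f g i x) := by
  have h2 := sign_mul_integrable hf.continuous
    ((hχ.mul (hg.continuous.abs.mul
      (pd_smooth hf i).continuous)).integrable_of_hasCompactSupport hχc.mul_right)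
  refine h2.congr (Eventually.of_forall fun x => ?_)
  simp only [Pi.mul_apply, fluxDensity]
  ring

lemma surf_sabs_tendsto (hf : ContDiff ℝ ∞ f) (hg : ContDiff ℝ ∞ g) (hχ : ContDiff ℝ ∞ χ)
    (hχc : HasCompactSupport χ) (hlap : ∀ x, lap f x = -lam ^ 2 * f x) :
    Tendsto (fun k : ℕ => surf f (fun x => χ x * sabs g (1 / ((k:ℝ) + 1)) x)) atTop
      (𝓝 (1 / 2 * ((∫ x, χ x * symDensity lam f g x) -
        ∑ i, ∫ x, pd i χ x * fluxDensity f g i x))) := by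
  have hpos : ∀ k : ℕ, (0:ℝ) < 1 / ((k:ℝ) + 1) := fun k => by positivity
  have hle : ∀ k : ℕ, 1 / ((k:ℝ) + 1) ≤ 1 := fun k => by
    rw [div_le_one (by positivity)]; linarith [(Nat.cast_nonneg k : (0:ℝ) ≤ k)]
  have i1 := symDensity_mul_integrable (lam := lam) hf hg hχ hχc
  have i2 : ∀ i, Integrable (fun x => pd i χ x * fluxDensity f g i x) := fun i =>
    fluxDensity_mul_integrable hf hg (pd_smooth hχ i).continuous (pd_compact hχc i) i
  have hG : Continuous (fun x => ∑ i, pd i f x * pd i g x) := continuous_finsetSum _ fun i _ =>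
    (pd_smooth hf i).continuous.mul (pd_smooth hg i).continuous
  have hX : Continuous (fun x => ∑ i, pd i χ x * pd i f x) := continuous_finsetSum _ fun i _ =>
    (pd_smooth hχ i).continuous.mul (pd_smooth hf i).continuous
  have hXc : HasCompactSupport (fun x => ∑ i, pd i χ x * pd i f x) := by
    refine hχc.of_isClosed_subset (isClosed_tsupport _) (closure_minimal (fun x hx => ?_)
      (isClosed_tsupport _))
    by_contra hn
    refine hx (Finset.sum_eq_zero fun i _ => ?_)
    have : pd i χ x = 0 := by
      unfold pd
      rw [image_eq_zero_of_notMem_tsupport (fun h => hn (tsupport_fderiv_subset ℝ h))]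
      rfl
    rw [this, zero_mul]
  have hXa : HasCompactSupport (fun x => |∑ i, pd i χ x * pd i f x|) :=
    HasCompactSupport.comp_left (g := fun t : ℝ => |t|) hXc abs_zero
  have h1s : Continuous (sabs g 1) := (sabs_smooth hg one_pos).continuous
  have hlim : (1:ℝ) / 2 * ((∫ x, χ x * symDensity lam f g x) -
      ∑ i, ∫ x, pd i χ x * fluxDensity f g i x) = -(1/2) * ∫ x, Real.sign (f x) *
        (χ x * (Real.sign (g x) * (∑ i, pd i f x * pd i g x) - lam ^ 2 * (|g x| * f x)) +
          |g x| * ∑ i, pd i χ x * pd i f x) := by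
    rw [← integral_finsetSum _ fun i _ => i2 i,
      ← integral_sub i1 (integrable_finsetSum _ fun i _ => i2 i), ← integral_const_mul,
      ← integral_const_mul]
    refine integral_congr_ae (Eventually.of_forall fun x => ?_)
    have e1 : ∑ i, pd i χ x * fluxDensity f g i x =
        Real.sign (f x) * |g x| * ∑ i, pd i χ x * pd i f x := by
      rw [Finset.mul_sum]
      refine Finset.sum_congr rfl fun i _ => ?_
      unfold fluxDensity; ring
    simp only [e1, symDensity, ← sign_mul_self_eq_abs (f x)]
    ring
  rw [hlim]
  unfold surf
  refine Tendsto.const_mul _ ?_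
  refine tendsto_integral_of_dominated_convergence
    (fun x => |χ x| * (|∑ i, pd i f x * pd i g x| + lam ^ 2 * (sabs g 1 x * |f x|)) +
      sabs g 1 x * |∑ i, pd i χ x * pd i f x|) (fun k => ?_) ?_ (fun k => ?_) ?_
  · exact (sign_mul_integrable hf.continuous (div_integrable hf
      (hχ.mul (sabs_smooth hg (hpos k))) hχc.mul_right)).aestronglyMeasurable
  · refine Integrable.add ?_ ?_
    · refine Continuous.integrable_of_hasCompactSupport (hχ.continuous.abs.mul
        (hG.abs.add (continuous_const.mul (h1s.mul hf.continuous.abs)))) ?_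
      exact HasCompactSupport.mul_right (hχc.comp_left abs_zero)
    · exact Continuous.integrable_of_hasCompactSupport (h1s.mul hX.abs) hXa.mul_left
  · refine Eventually.of_forall fun x => ?_
    rw [div_sabs hf hg hχ hlap (hpos k), Real.norm_eq_abs, abs_mul]
    have hs1 := sabs_mono (g := g) (hpos k) (hle k) x
    have hs0 := (sabs_pos (g := g) (hpos k) x).le
    refine (mul_le_of_le_one_left (abs_nonneg _) (abs_sign_le _)).trans
      ((abs_add_le _ _).trans (add_le_add ?_ ?_))
    · rw [abs_mul]
      refine mul_le_mul_of_nonneg_left ((abs_sub _ _).trans (add_le_add ?_ ?_)) (abs_nonneg _)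
      · rw [abs_mul]
        exact mul_le_of_le_one_left (abs_nonneg _) (abs_div_sabs_le (hpos k) x)
      · rw [abs_mul, abs_mul, abs_of_nonneg (sq_nonneg lam), abs_of_nonneg hs0]
        gcongr
    · rw [abs_mul, abs_of_nonneg hs0]
      gcongr
  · refine Eventually.of_forall fun x => ?_
    simp only [div_sabs hf hg hχ hlap (hpos _)]
    exact ((((div_sabs_tendsto x).mul_const _).sub (((sabs_tendsto x).mul_const _).const_mul
      _)).const_mul _ |>.add ((sabs_tendsto x).mul_const _)).const_mul _

end Limit

/-- The weighted nodal integral of `|g| ‖∇f‖` expressed by volume integrals. -/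
lemma nodal_abs {m : ℕ} {f g χ : EuclideanSpace ℝ (Fin (m + 1)) → ℝ} {lam : ℝ}
    (hf : ContDiff ℝ ∞ f) (hg : ContDiff ℝ ∞ g) (hχ : ContDiff ℝ ∞ χ)
    (hχc : HasCompactSupport χ) (hχ0 : ∀ x, 0 ≤ χ x) (hlap : ∀ x, lap f x = -lam ^ 2 * f x) :
    IntegrableOn (fun x => χ x * (|g x| * ‖gradient f x‖)) {x | f x = 0} μH[m] ∧
    ∫ x in {x | f x = 0}, χ x * (|g x| * ‖gradient f x‖) ∂μH[m] =
      hausdorffConst m * (1 / 2 * ((∫ x, χ x * symDensity lam f g x) -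
        ∑ i, ∫ x, pd i χ x * fluxDensity f g i x)) := by
  have hpos : ∀ k : ℕ, (0:ℝ) < 1 / ((k:ℝ) + 1) := fun k => by positivity
  have hle : ∀ k : ℕ, 1 / ((k:ℝ) + 1) ≤ 1 := fun k => by
    rw [div_le_one (by positivity)]; linarith [(Nat.cast_nonneg k : (0:ℝ) ≤ k)]
  have hn : ∀ τ : ℝ, 0 < τ → nodal f (fun x => χ x * sabs g τ x) =
      ENNReal.ofReal (hausdorffConst m * surf f (fun x => χ x * sabs g τ x)) := fun τ hτ =>
    nodal_eq hf (hχ.mul (sabs_smooth hg hτ)) hχc.mul_right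
      (fun x => mul_nonneg (hχ0 x) (sabs_pos hτ x).le)
  have hgr := (continuous_gradient hf).norm
  have hlimL : Tendsto (fun k : ℕ => nodal f (fun x => χ x * sabs g (1 / ((k:ℝ) + 1)) x)) atTop
      (𝓝 (nodal f (fun x => χ x * |g x|))) := by
    unfold nodal
    refine tendsto_lintegral_of_dominated_convergence
      (fun x => ENNReal.ofReal (χ x * sabs g 1 x * ‖gradient f x‖)) (fun k => ?_) (fun k => ?_)
      ?_ ?_
    · exact ((hχ.mul (sabs_smooth hg (hpos k))).continuous.mul hgr).measurable.ennreal_ofReal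
    · refine Eventually.of_forall fun x => ENNReal.ofReal_le_ofReal ?_
      have := hχ0 x
      have := sabs_mono (g := g) (hpos k) (hle k) x
      show χ x * sabs g (1 / ((k:ℝ) + 1)) x * _ ≤ _
      gcongr
    · have := hn 1 one_pos
      unfold nodal at this
      rw [this]
      exact ENNReal.ofReal_ne_top
    · exact Eventually.of_forall fun x => (ENNReal.continuous_ofReal.tendsto _).comp
        (((sabs_tendsto x).const_mul _).mul_const _)
  have hlimR := surf_sabs_tendsto hf hg hχ hχc hlap
  set V := 1 / 2 * ((∫ x, χ x * symDensity lam f g x) -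
        ∑ i, ∫ x, pd i χ x * fluxDensity f g i x) with hV
  have hV0 : 0 ≤ V := ge_of_tendsto' hlimR fun k =>
    surf_nonneg hf (hχ.mul (sabs_smooth hg (hpos k))) hχc.mul_right
      (fun x => mul_nonneg (hχ0 x) (sabs_pos (hpos k) x).le)
  have hval : nodal f (fun x => χ x * |g x|) = ENNReal.ofReal (hausdorffConst m * V) := by
    simp only [hn _ (hpos _)] at hlimL
    exact tendsto_nhds_unique hlimL
      (ENNReal.continuous_ofReal.continuousAt.tendsto.comp (hlimR.const_mul _))
  unfold nodal at hval
  simp only [mul_assoc] at hval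
  have hc : Continuous (fun x => χ x * (|g x| * ‖gradient f x‖)) :=
    hχ.continuous.mul (hg.continuous.abs.mul hgr)
  have h0 : ∀ x, 0 ≤ χ x * (|g x| * ‖gradient f x‖) := fun x =>
    mul_nonneg (hχ0 x) (by positivity)
  constructor
  · refine ⟨hc.measurable.aestronglyMeasurable, ?_⟩
    rw [hasFiniteIntegral_iff_ofReal (Eventually.of_forall h0), hval]
    exact ENNReal.ofReal_lt_top
  · rw [integral_eq_lintegral_of_nonneg_ae (Eventually.of_forall h0)
      hc.measurable.aestronglyMeasurable, hval, ENNReal.toReal_ofReal]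
    exact mul_nonneg (NNReal.coe_nonneg _) hV0

/-! ### Unfolding to the fundamental domain -/

/-- The integer vector `-k`, with entries in `{0, -1}`. -/
def corner {n : ℕ} (k : Fin n → Fin 2) : EuclideanSpace ℝ (Fin n) :=
  (WithLp.equiv 2 (Fin n → ℝ)).symm fun i => ((-((k i : ℕ) : ℤ) : ℤ) : ℝ)

lemma corner_apply {n : ℕ} (k : Fin n → Fin 2) (i : Fin n) :
    corner k i = -((k i : ℕ) : ℝ) := by
  simp [corner]

lemma measurableSet_Qcube (n : ℕ) : MeasurableSet (Qcube n) := by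
  have : Qcube n = ⋂ i, (fun x : EuclideanSpace ℝ (Fin n) => x i) ⁻¹' Ico 0 1 := by
    ext x; simp [Qcube]
  rw [this]
  exact MeasurableSet.iInter fun i =>
    (by fun_prop : Measurable fun x : EuclideanSpace ℝ (Fin n) => x i) measurableSet_Ico

/-- Unfolding: integrating a periodic function against a product weight supported in `[-1,1)ⁿ`
is integrating over `Q` against the periodised weight, here the constant `∏ⱼ sⱼ`. -/
lemma unfold_integral {n : ℕ} (ν : Measure (EuclideanSpace ℝ (Fin n))) [ν.IsAddRightInvariant]
    {F : EuclideanSpace ℝ (Fin n) → ℝ} (hF : ZPeriodic F) (θ : Fin n → ℝ → ℝ) (s : Fin n → ℝ)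
    (hoff : ∀ j t, t ∉ Ico (-1 : ℝ) 1 → θ j t = 0)
    (hsum : ∀ j, ∀ t ∈ Ico (0 : ℝ) 1, θ j t + θ j (t - 1) = s j)
    (hint : Integrable (fun x => (∏ j, θ j (x j)) * F x) ν) :
    ∫ x, (∏ j, θ j (x j)) * F x ∂ν = (∏ j, s j) * ∫ x in Qcube n, F x ∂ν := by
  classical
  set H : EuclideanSpace ℝ (Fin n) → ℝ := fun x => (∏ j, θ j (x j)) * F x with hH
  let A : (Fin n → Fin 2) → Set (EuclideanSpace ℝ (Fin n)) :=
    fun k => (fun x => x - corner k) ⁻¹' Qcube n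
  have hAm : ∀ k, MeasurableSet (A k) := fun k =>
    (measurable_id.sub_const _) (measurableSet_Qcube n)
  have hA : ∀ k x, x ∈ A k ↔ ∀ i, x i + ((k i : ℕ) : ℝ) ∈ Ico (0:ℝ) 1 := by
    intro k x
    simp [A, Qcube, corner_apply]
  have hdisj : Pairwise (Function.onFun Disjoint A) := by
    intro k l hkl
    refine disjoint_left.2 fun x hk hl => hkl (funext fun i => ?_)
    have h1 := (hA k x).1 hk i
    have h2 := (hA l x).1 hl i
    have h3 : ((k i : ℕ) : ℝ) < ((l i : ℕ) : ℝ) + 1 := by linarith [h1.2, h2.1]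
    have h4 : ((l i : ℕ) : ℝ) < ((k i : ℕ) : ℝ) + 1 := by linarith [h2.2, h1.1]
    norm_cast at h3 h4
    exact Fin.ext (by omega)
  have hzero : ∀ x, x ∉ ⋃ k, A k → H x = 0 := by
    intro x hx
    have : ∃ i, x i ∉ Ico (-1:ℝ) 1 := by
      by_contra! hc
      refine hx (mem_iUnion.2 ⟨fun i => if x i < 0 then 1 else 0, (hA _ x).2 fun i => ?_⟩)
      have := hc i
      split_ifs with h
      · simp only [Fin.val_one, Nat.cast_one, mem_Ico]
        exact ⟨by linarith [this.1], by linarith⟩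
      · simp only [Fin.val_zero, Nat.cast_zero, add_zero, mem_Ico]
        exact ⟨not_lt.1 h, this.2⟩
    obtain ⟨i, hi⟩ := this
    simp only [hH]
    rw [Finset.prod_eq_zero (Finset.mem_univ i) (hoff i _ hi), zero_mul]
  have hpiece : ∀ k, ∫ x in A k, H x ∂ν = ∫ x in Qcube n, H (x + corner k) ∂ν := by
    intro k
    rw [← integral_indicator (hAm k), ← integral_add_right_eq_self _ (corner k),
      ← integral_indicator (measurableSet_Qcube n)]
    refine integral_congr_ae (Eventually.of_forall fun x => ?_)
    simp [indicator, A]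
  have hpi : ∀ k, IntegrableOn (fun x => H (x + corner k)) (Qcube n) ν := fun k =>
    (hint.comp_add_right (corner k)).integrableOn
  calc ∫ x, H x ∂ν = ∫ x in ⋃ k, A k, H x ∂ν :=
        (setIntegral_eq_integral_of_forall_compl_eq_zero hzero).symm
    _ = ∑ k, ∫ x in A k, H x ∂ν :=
        integral_iUnion_fintype hAm hdisj fun k => hint.integrableOn
    _ = ∑ k, ∫ x in Qcube n, H (x + corner k) ∂ν := Finset.sum_congr rfl fun k _ => hpiece k
    _ = ∫ x in Qcube n, ∑ k, H (x + corner k) ∂ν := (integral_finsetSum _ fun k _ => hpi k).symm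
    _ = ∫ x in Qcube n, (∏ j, s j) * F x ∂ν := by
        refine setIntegral_congr_fun (measurableSet_Qcube n) fun x hx => ?_
        have hFk : ∀ k, F (x + corner k) = F x := fun k => hF x _
        simp only [hH, hFk, ← Finset.sum_mul]
        congr 1
        have := Finset.prod_univ_sum (fun _ : Fin n => (Finset.univ : Finset (Fin 2)))
          (fun j b => θ j (x j - ((b : ℕ) : ℝ)))
        rw [Fintype.piFinset_univ] at this
        simp only [PiLp.add_apply, corner_apply, ← sub_eq_add_neg]
        rw [← this]
        refine Finset.prod_congr rfl fun j _ => ?_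
        rw [← hsum j (x j) (hx j)]
        simp [Fin.sum_univ_two]
    _ = _ := integral_const_mul _ _

/-- A bump on `[-1,1]` whose integer translates sum to `1`. -/
def bump (t : ℝ) : ℝ := Real.smoothTransition (t + 1) - Real.smoothTransition t

lemma bump_smooth : ContDiff ℝ ∞ bump :=
  (smoothTransition_smooth.comp (contDiff_id.add contDiff_const)).sub smoothTransition_smooth

lemma bump_nonneg (t : ℝ) : 0 ≤ bump t :=
  sub_nonneg.2 (Real.smoothTransition.monotone (by linarith))

lemma bump_off {t : ℝ} (ht : t ∉ Ico (-1 : ℝ) 1) : bump t = 0 := by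
  unfold bump
  rw [mem_Ico, not_and_or, not_le, not_lt] at ht
  rcases ht with h | h
  · rw [Real.smoothTransition.zero_of_nonpos (by linarith),
      Real.smoothTransition.zero_of_nonpos (by linarith), sub_zero]
  · rw [Real.smoothTransition.one_of_one_le (by linarith),
      Real.smoothTransition.one_of_one_le (by linarith), sub_self]

lemma bump_sum {t : ℝ} (ht : t ∈ Ico (0 : ℝ) 1) : bump t + bump (t - 1) = 1 := by
  unfold bump
  rw [sub_add_cancel, Real.smoothTransition.one_of_one_le (by linarith [ht.1]),
    Real.smoothTransition.zero_of_nonpos (x := t - 1) (by linarith [ht.2])]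
  ring

lemma deriv_bump (t : ℝ) : deriv bump t =
    deriv Real.smoothTransition (t + 1) - deriv Real.smoothTransition t := by
  have hd : Differentiable ℝ Real.smoothTransition :=
    smoothTransition_smooth.differentiable (by simp)
  have h1 : HasDerivAt (fun s => Real.smoothTransition (s + 1))
      (deriv Real.smoothTransition (t + 1)) t := (hd (t + 1)).hasDerivAt.comp_add_const t 1
  exact (h1.sub (hd t).hasDerivAt).deriv

lemma deriv_bump_off {t : ℝ} (ht : t ∉ Ico (-1 : ℝ) 1) : deriv bump t = 0 := by
  rw [mem_Ico, not_and_or, not_le, not_lt] at ht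
  rw [deriv_bump]
  rcases ht with h | h
  · rw [deriv_smoothTransition_eq_zero (Or.inl (by linarith)),
      deriv_smoothTransition_eq_zero (Or.inl (by linarith)), sub_zero]
  · rw [deriv_smoothTransition_eq_zero (Or.inr (by linarith)),
      deriv_smoothTransition_eq_zero (Or.inr (by linarith)), sub_zero]

lemma deriv_bump_sum {t : ℝ} (ht : t ∈ Ico (0 : ℝ) 1) : deriv bump t + deriv bump (t - 1) = 0 := by
  rw [deriv_bump, deriv_bump, sub_add_cancel,
    deriv_smoothTransition_eq_zero (t := t + 1) (Or.inr (by linarith [ht.1])),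
    deriv_smoothTransition_eq_zero (t := t - 1) (Or.inl (by linarith [ht.2]))]
  ring

/-- The product cutoff on `ℝⁿ`, whose `ℤⁿ`-translates sum to `1`. -/
def chi (n : ℕ) (x : EuclideanSpace ℝ (Fin n)) : ℝ := ∏ j, bump (x j)

lemma chi_smooth (n : ℕ) : ContDiff ℝ ∞ (chi n) := by
  unfold chi
  exact contDiff_prod fun j _ => bump_smooth.comp (contDiff_piLp_apply 2)

lemma chi_nonneg (n : ℕ) (x : EuclideanSpace ℝ (Fin n)) : 0 ≤ chi n x :=
  Finset.prod_nonneg fun _ _ => bump_nonneg _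

lemma chi_compact (n : ℕ) : HasCompactSupport (chi n) := by
  refine HasCompactSupport.intro
    ((isCompact_univ_pi fun _ : Fin n => isCompact_Icc (a := (-1:ℝ)) (b := 1)).image
      (PiLp.continuous_toLp 2 fun _ : Fin n => ℝ)) fun x hx => ?_
  by_contra hc
  refine hx ⟨WithLp.ofLp x, fun i _ => ?_, rfl⟩
  by_contra hi
  refine hc (Finset.prod_eq_zero (Finset.mem_univ i) (bump_off fun h => hi ⟨h.1, h.2.le⟩))

lemma pd_chi {n : ℕ} (i : Fin n) (x : EuclideanSpace ℝ (Fin n)) :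
    pd i (chi n) x = ∏ j, (if j = i then deriv bump else bump) (x j) := by
  have h := (smooth_diff (chi_smooth n) x).lineDeriv_eq_fderiv
    (v := EuclideanSpace.single i (1:ℝ))
  unfold pd
  rw [← h, lineDeriv]
  have e : (fun t : ℝ => chi n (x + t • EuclideanSpace.single i (1:ℝ))) =
      fun t => bump (t + x i) * ∏ j ∈ Finset.univ.erase i, bump (x j) := by
    ext t
    unfold chi
    rw [← Finset.mul_prod_erase _ _ (Finset.mem_univ i)]
    congr 1
    · simp [add_comm]
    · refine Finset.prod_congr rfl fun j hj => ?_
      simp [(Finset.mem_erase.1 hj).1]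
  have hb : HasDerivAt (fun t : ℝ => bump (t + x i)) (deriv bump (x i)) 0 := by
    have : HasDerivAt bump (deriv bump (x i)) (0 + x i) := by
      rw [zero_add]
      exact (bump_smooth.differentiable (by simp) _).hasDerivAt
    exact this.comp_add_const 0 (x i)
  rw [e, (hb.mul_const _).deriv, ← Finset.mul_prod_erase _ _ (Finset.mem_univ i)]
  rw [if_pos rfl]
  congr 1
  refine Finset.prod_congr rfl fun j hj => ?_
  rw [if_neg (Finset.mem_erase.1 hj).1]

section Periodic
variable {n : ℕ} {f g : EuclideanSpace ℝ (Fin n) → ℝ}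

lemma pd_periodic (hf : ZPeriodic f) (i : Fin n) : ZPeriodic (pd i f) := by
  intro x k
  unfold pd
  rw [← fderiv_comp_add_right]
  have : (fun y => f (y + (WithLp.equiv 2 (Fin n → ℝ)).symm fun i => (k i : ℝ))) = f :=
    funext fun y => hf y k
  rw [this]

lemma gradient_periodic (hf : ZPeriodic f) (x : EuclideanSpace ℝ (Fin n)) (k : Fin n → ℤ) :
    gradient f (x + (WithLp.equiv 2 (Fin n → ℝ)).symm fun i => (k i : ℝ)) = gradient f x := by
  ext i
  rw [gradient_apply, gradient_apply]
  exact pd_periodic hf i x k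

lemma symDensity_periodic (lam : ℝ) (hf : ZPeriodic f) (hg : ZPeriodic g) :
    ZPeriodic (symDensity lam f g) := by
  intro x k
  unfold symDensity
  simp only [hf x k, hg x k, pd_periodic hf _ x k, pd_periodic hg _ x k]

lemma fluxDensity_periodic (hf : ZPeriodic f) (hg : ZPeriodic g) (i : Fin n) :
    ZPeriodic (fluxDensity f g i) := by
  intro x k
  unfold fluxDensity
  simp only [hf x k, hg x k, pd_periodic hf _ x k]

end Periodic

/-- The nodal integral over the torus as a volume integral that is symmetric in `f` and `g`. -/
lemma nodal_torus {m : ℕ} {f g : EuclideanSpace ℝ (Fin (m + 1)) → ℝ} {lam : ℝ}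
    (hf : ContDiff ℝ ∞ f) (hg : ContDiff ℝ ∞ g) (hfp : ZPeriodic f) (hgp : ZPeriodic g)
    (hlap : ∀ x, lap f x = -lam ^ 2 * f x) :
    ∫ x in {x ∈ Qcube (m + 1) | f x = 0}, |g x| * ‖gradient f x‖ ∂μH[m] =
      hausdorffConst m * (1 / 2 * ∫ x in Qcube (m + 1), symDensity lam f g x) := by
  obtain ⟨hI, hE⟩ := nodal_abs hf hg (chi_smooth (m + 1)) (chi_compact _) (chi_nonneg _) hlap
  have hZ : MeasurableSet {x | f x = 0} :=
    (isClosed_eq hf.continuous continuous_const).measurableSet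
  set F : EuclideanSpace ℝ (Fin (m + 1)) → ℝ :=
    indicator {x | f x = 0} fun x => |g x| * ‖gradient f x‖ with hF
  have hFp : ZPeriodic F := by
    intro x k
    simp only [hF, indicator, mem_ofPred_eq, hfp x k, hgp x k, gradient_periodic hfp x k]
  have hind : indicator {x | f x = 0} (fun x => chi (m + 1) x * (|g x| * ‖gradient f x‖)) =
      fun x => chi (m + 1) x * F x := by
    ext x
    by_cases h : f x = 0 <;> simp [hF, h]
  have e1 : ∫ x in {x ∈ Qcube (m + 1) | f x = 0}, |g x| * ‖gradient f x‖ ∂μH[m] =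
      ∫ x, chi (m + 1) x * F x ∂μH[m] := by
    have h := unfold_integral (μH[m]) hFp (fun _ => bump) (fun _ => 1)
      (fun _ _ ht => bump_off ht) (fun _ _ ht => bump_sum ht) (by
        have := hI.integrable_indicator hZ
        rw [hind] at this
        exact this)
    simp only [Finset.prod_const_one, one_mul] at h
    refine Eq.trans ?_ h.symm
    rw [hF, setIntegral_indicator hZ]
    rfl
  have e2 : ∫ x, chi (m + 1) x * F x ∂μH[m] =
      ∫ x in {x | f x = 0}, chi (m + 1) x * (|g x| * ‖gradient f x‖) ∂μH[m] := by
    rw [← integral_indicator hZ, hind]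
  have e3 : ∫ x, chi (m + 1) x * symDensity lam f g x =
      ∫ x in Qcube (m + 1), symDensity lam f g x := by
    have h := unfold_integral volume (symDensity_periodic lam hfp hgp) (fun _ => bump) (fun _ => 1)
      (fun _ _ ht => bump_off ht) (fun _ _ ht => bump_sum ht)
      (symDensity_mul_integrable hf hg (chi_smooth _) (chi_compact _))
    simp only [Finset.prod_const_one, one_mul] at h
    exact h
  -- the flux terms vanish because the integer translates of `∂ᵢχ` sum to `0`
  have e4 : ∀ i, ∫ x, pd i (chi (m + 1)) x * fluxDensity f g i x = 0 := by
    intro i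
    have hint := fluxDensity_mul_integrable hf hg (pd_smooth (chi_smooth (m + 1)) i).continuous
      (pd_compact (chi_compact _) i) i
    have hp : ∏ j : Fin (m + 1), (if j = i then (0:ℝ) else 1) = 0 :=
      Finset.prod_eq_zero (Finset.mem_univ i) (if_pos rfl)
    simp only [pd_chi] at hint ⊢
    rw [unfold_integral volume (fluxDensity_periodic hfp hgp i)
      (fun j => if j = i then deriv bump else bump) (fun j => if j = i then 0 else 1)
      (fun j t ht => by
        split_ifs
        · exact deriv_bump_off ht
        · exact bump_off ht)
      (fun j t ht => by
        split_ifs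
        · exact deriv_bump_sum ht
        · exact bump_sum ht) hint, hp, zero_mul]
  rw [e1, e2, hE, e3]
  simp [e4]

lemma symDensity_comm {n : ℕ} (lam : ℝ) (f g : EuclideanSpace ℝ (Fin n) → ℝ) :
    symDensity lam f g = symDensity lam g f := by
  ext x
  simp only [symDensity, mul_comm (pd _ f x)]
  ring

theorem same_eigenvalue_symmetric_identity (n : ℕ) (hn : 2 ≤ n)
    (φj φk : EuclideanSpace ℝ (Fin n) → ℝ)
    (hφj : ContDiff ℝ (⊤ : ℕ∞) φj) (hperj : ZPeriodic φj)
    (hφk : ContDiff ℝ (⊤ : ℕ∞) φk) (hperk : ZPeriodic φk)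
    (lam : ℝ) (hlam : 0 < lam)
    (heigj : ∀ x, lap φj x = -lam ^ 2 * φj x)
    (heigk : ∀ x, lap φk x = -lam ^ 2 * φk x) :
    ∫ x in {x ∈ Qcube n | φj x = 0}, |φk x| * ‖gradient φj x‖ ∂μH[(n : ℝ) - 1] =
      ∫ x in {x ∈ Qcube n | φk x = 0}, |φj x| * ‖gradient φk x‖ ∂μH[(n : ℝ) - 1] := by
  obtain ⟨m, rfl⟩ : ∃ m, n = m + 1 := ⟨n - 1, by omega⟩
  have hm : ((m + 1 : ℕ) : ℝ) - 1 = m := by push_cast; ring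
  rw [hm, nodal_torus hφj hφk hperj hperk heigj, nodal_torus hφk hφj hperk hperj heigk,
    symDensity_comm]
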